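/- arXiv:1201.5328 — 2 statements merged into one kernel-verified Lean document; each statement's English description precedes it below -/
import Mathlib

section
/- Let Ω(t) be a one-parameter family of open bounded sets of ℝ^N smoothly converging as t → 0 to a ball Ω, with |Ω(t)| = |Ω| for all t, with transformations Φ_t whose initial velocity field is orthogonal to ∂Ω, and let λ(t) be the first Dirichlet eigenvalues with jointly smooth eigenfunctions. Then λ'(0) = 0: the ball is a critical point of the first Dirichlet Laplacian eigenvalue among volume-preserving smooth perturbations. -/
open MeasureTheory Metric Set Filter Topology
open scoped RealInnerProductSpace

noncomputable section

abbrev euc (N : ℕ) := EuclideanSpace ℝ (Fin N)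

/-- Bessel function of the first kind of order `ν`, via its power series. -/
def besselJ (ν : ℝ) (x : ℝ) : ℝ :=
  ∑' m : ℕ, ((-1 : ℝ) ^ m / (m.factorial * Real.Gamma (m + ν + 1))) *
    (x / 2) ^ (2 * (m : ℝ) + ν)

/-- First positive zero of the Bessel function `J_ν`. -/
def besselJzero (ν : ℝ) : ℝ := sInf {x : ℝ | 0 < x ∧ besselJ ν x = 0}

/-- Volume of the unit ball of `ℝ^N`. -/
def ballVol (N : ℕ) : ℝ := (volume (ball (0 : euc N) 1)).toReal

/-- Perimeter: `(N-1)`-dimensional Hausdorff measure of the topological boundary. -/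
def perim (N : ℕ) (Ω : Set (euc N)) : ℝ := (μH[(N : ℝ) - 1] (frontier Ω)).toReal

/-- First Dirichlet Laplacian eigenvalue: infimum of Rayleigh quotients over nonzero
smooth functions compactly supported in `Ω`. -/
def firstEigenvalue (N : ℕ) (Ω : Set (euc N)) : ℝ :=
  sInf { R : ℝ | ∃ u : euc N → ℝ, ContDiff ℝ (⊤ : ℕ∞) u ∧ HasCompactSupport u ∧
    tsupport u ⊆ Ω ∧ u ≠ 0 ∧
    R = (∫ x, ‖gradient u x‖ ^ 2) / (∫ x, u x ^ 2) }

/-- Radius of the ball `Ω♯` with the same Lebesgue measure as `Ω`. -/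
def sharpRadius (N : ℕ) (Ω : Set (euc N)) : ℝ :=
  ((volume Ω).toReal / ballVol N) ^ ((1 : ℝ) / N)

/-- Isoperimetric deficit `δP(Ω) = Per(Ω)/Per(Ω♯) - 1`. -/
def perDeficit (N : ℕ) (Ω : Set (euc N)) : ℝ :=
  perim N Ω / perim N (ball (0 : euc N) (sharpRadius N Ω)) - 1

/-- Faber-Krahn deficit `δλ(Ω) = λ(Ω)/λ(Ω♯) - 1`. -/
def fkDeficit (N : ℕ) (Ω : Set (euc N)) : ℝ :=
  firstEigenvalue N Ω / firstEigenvalue N (ball (0 : euc N) (sharpRadius N Ω)) - 1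

/-- A one-parameter family `Ω t` of subsets of `ℝ^N` smoothly converges to `Ω₀` as `t → 0`. -/
structure SmoothlyConverges (N : ℕ) (Ω : ℝ → Set (euc N)) (Ω₀ : Set (euc N)) where
  δ : ℝ
  δ_pos : 0 < δ
  Φ : ℝ → euc N → euc N
  Φinv : ℝ → euc N → euc N
  left_inv : ∀ t ∈ Ico (0 : ℝ) δ, Function.LeftInverse (Φinv t) (Φ t)
  right_inv : ∀ t ∈ Ico (0 : ℝ) δ, Function.RightInverse (Φinv t) (Φ t)
  smooth_x : ∀ t ∈ Ico (0 : ℝ) δ, ContDiff ℝ (⊤ : ℕ∞) (Φ t)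
  smooth_x_inv : ∀ t ∈ Ico (0 : ℝ) δ, ContDiff ℝ (⊤ : ℕ∞) (Φinv t)
  smooth_t : ∀ x, ContDiffOn ℝ (⊤ : ℕ∞) (fun t => Φ t x) (Ico (0 : ℝ) δ)
  smooth_t_inv : ∀ x, ContDiffOn ℝ (⊤ : ℕ∞) (fun t => Φinv t x) (Ico (0 : ℝ) δ)
  init : Ω 0 = Ω₀
  image : ∀ t ∈ Ico (0 : ℝ) δ, Ω t = Φ t '' Ω₀

/-- The Laplacian of `f : ℝ^N → ℝ`, as the trace of the second derivative. -/
def lap (N : ℕ) (f : euc N → ℝ) (x : euc N) : ℝ :=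
  ∑ i : Fin N,
    iteratedFDeriv ℝ 2 f x ![EuclideanSpace.single i 1, EuclideanSpace.single i 1]

/-- The divergence of a vector field on `ℝ^N`. -/
def diver (N : ℕ) (f : euc N → euc N) (x : euc N) : ℝ :=
  ∑ i : Fin N, ⟪fderiv ℝ f x (EuclideanSpace.single i 1), (EuclideanSpace.single i 1 : euc N)⟫

/-- The constant `G_N`: the modulus of the gradient on the boundary of the normalized first
eigenfunction of the unit ball. -/
def GN (N : ℕ) : ℝ :=
  (besselJzero ((N : ℝ) / 2 - 1)) ^ 2 *
      deriv (besselJ ((N : ℝ) / 2 - 1)) (besselJzero ((N : ℝ) / 2 - 1)) /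
    Real.sqrt (N * ballVol N *
      ∫ r in (0 : ℝ)..(besselJzero ((N : ℝ) / 2 - 1)), r * besselJ ((N : ℝ) / 2 - 1) r ^ 2)

/-- The optimal constant `C_N` of the paper. -/
def CN (N : ℕ) : ℝ :=
  (N * (N + 1) *
      ∫ r in (0 : ℝ)..(besselJzero ((N : ℝ) / 2 - 1)), r * besselJ ((N : ℝ) / 2 - 1) r ^ 2) /
    (2 * (besselJzero ((N : ℝ) / 2 - 1) *
        deriv (besselJ ((N : ℝ) / 2 - 1)) (besselJzero ((N : ℝ) / 2 - 1))) ^ 2 *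
      ((besselJzero ((N : ℝ) / 2 - 1)) ^ 2 - N))

end


/-! polar coordinates -/

theorem polar_mul (N : ℕ) (F : euc N → ℝ) (q : ℝ → ℝ) (hN : 2 ≤ N) :
    ∫ x : euc N, F (‖x‖⁻¹ • x) * q ‖x‖ =
      (∫ w : sphere (0 : euc N) 1, F w ∂((volume : Measure (euc N)).toSphere)) *
      ∫ r : Ioi (0 : ℝ), q r ∂(Measure.volumeIoiPow (N - 1)) := by
  have : Nontrivial (euc N) := by
    have : Nonempty (Fin N) := ⟨⟨0, by omega⟩⟩
    infer_instance
  have hd : Module.finrank ℝ (euc N) = N := by simp [euc]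
  have hmp := (volume : Measure (euc N)).measurePreserving_homeomorphUnitSphereProd
  rw [hd] at hmp
  rw [← integral_prod_mul (μ := (volume : Measure (euc N)).toSphere)
    (fun w : sphere (0 : euc N) 1 => F w) (fun r : Ioi (0 : ℝ) => q r)]
  rw [← hmp.integral_comp (Homeomorph.measurableEmbedding _)]
  rw [← restrict_compl_singleton (μ := (volume : Measure (euc N))) 0,
    ← integral_subtype_comap (measurableSet_singleton _).compl
      (fun x : euc N => F (‖x‖⁻¹ • x) * q ‖x‖), restrict_compl_singleton]
  simp

theorem polar_vol (N : ℕ) (hN : 2 ≤ N) (h : euc N → ℝ)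
    (hc : Continuous fun w : sphere (0 : euc N) 1 => h w)
    (hp : ∀ w : euc N, ‖w‖ = 1 → 0 < h w) :
    volume {x : euc N | x ≠ 0 ∧ ‖x‖ < h (‖x‖⁻¹ • x)} =
      ENNReal.ofReal (∫ w : sphere (0 : euc N) 1, h w ^ N / N
        ∂((volume : Measure (euc N)).toSphere)) := by
  have : Nontrivial (euc N) := by
    have : Nonempty (Fin N) := ⟨⟨0, by omega⟩⟩
    infer_instance
  have hd : Module.finrank ℝ (euc N) = N := by simp [euc]
  have hmp := (volume : Measure (euc N)).measurePreserving_homeomorphUnitSphereProd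
  rw [hd] at hmp
  let T : Set (sphere (0 : euc N) 1 × Ioi (0 : ℝ)) := {p | (p.2 : ℝ) < h p.1}
  have hT : MeasurableSet T := by
    apply measurableSet_lt
    · exact measurable_subtype_coe.comp measurable_snd
    · exact hc.measurable.comp measurable_fst
  have h1 := hmp.measure_preimage hT.nullMeasurableSet
  have h2 : volume {x : euc N | x ≠ 0 ∧ ‖x‖ < h (‖x‖⁻¹ • x)} =
      (Measure.comap ((↑) : ({0}ᶜ : Set (euc N)) → euc N) volume)
        ((homeomorphUnitSphereProd (euc N)) ⁻¹' T) := by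
    rw [comap_subtype_coe_apply (measurableSet_singleton _).compl]
    congr 1
    ext x
    simp [T, and_comm]
  rw [h2, h1, Measure.prod_apply hT, ofReal_integral_eq_lintegral_ofReal]
  · apply lintegral_congr
    intro w
    have hw : 0 < h w := hp w (by simp)
    have : (Prod.mk w ⁻¹' T) = Iio (⟨h w, hw⟩ : Ioi (0 : ℝ)) := by
      ext r
      simp [T, ← Subtype.coe_lt_coe]
    rw [this, Measure.volumeIoiPow_apply_Iio]
    obtain ⟨n, rfl⟩ : ∃ n, N = n + 1 := ⟨N - 1, by omega⟩
    simp
  · apply Continuous.integrable_of_hasCompactSupport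
    · exact (hc.pow N).div_const _
    · exact HasCompactSupport.of_compactSpace _
  · refine Filter.Eventually.of_forall fun w => ?_
    have hw : 0 < h w := hp w (by simp)
    positivity

/-! calculus of the Laplacian -/

theorem lap_eq (N : ℕ) (f : euc N → ℝ) (hf : ContDiff ℝ 2 f) (x : euc N) :
    lap N f x = ∑ i : Fin N, fderiv ℝ (fun y => fderiv ℝ f y (EuclideanSpace.single i 1)) x
      (EuclideanSpace.single i 1) := by
  unfold lap
  refine Finset.sum_congr rfl fun i _ => ?_
  rw [iteratedFDeriv_two_apply]
  have hd : DifferentiableAt ℝ (fderiv ℝ f) x :=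
    ((hf.fderiv_right (m := 1) (by norm_num)).differentiable (by norm_num)) x
  rw [fderiv_clm_apply hd (by fun_prop)]
  simp

theorem contDiff_partial {N : ℕ} {f : euc N → ℝ} (hf : ContDiff ℝ 2 f) (e : euc N) :
    ContDiff ℝ 1 (fun y => fderiv ℝ f y e) :=
  (hf.fderiv_right (m := 1) (by norm_num)).clm_apply contDiff_const

theorem lap_mul (N : ℕ) (f g : euc N → ℝ) (hf : ContDiff ℝ 2 f) (hg : ContDiff ℝ 2 g)
    (x : euc N) :
    lap N (fun y => f y * g y) x = f x * lap N g x + g x * lap N f x +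
      ∑ i : Fin N, 2 * (fderiv ℝ f x (EuclideanSpace.single i 1) *
        fderiv ℝ g x (EuclideanSpace.single i 1)) := by
  rw [lap_eq N _ (hf.mul hg), lap_eq N _ hf, lap_eq N _ hg, Finset.mul_sum, Finset.mul_sum,
    ← Finset.sum_add_distrib, ← Finset.sum_add_distrib]
  refine Finset.sum_congr rfl fun i _ => ?_
  have df : Differentiable ℝ f := hf.differentiable (by norm_num)
  have dg : Differentiable ℝ g := hg.differentiable (by norm_num)
  have df' := (contDiff_partial hf (EuclideanSpace.single i 1)).differentiable (by norm_num)
  have dg' := (contDiff_partial hg (EuclideanSpace.single i 1)).differentiable (by norm_num)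
  have h1 : (fun y => fderiv ℝ (fun y => f y * g y) y (EuclideanSpace.single i 1)) =
      fun y => f y * fderiv ℝ g y (EuclideanSpace.single i 1) +
        g y * fderiv ℝ f y (EuclideanSpace.single i 1) := by
    ext y
    rw [fderiv_fun_mul (df y) (dg y)]
    simp
  rw [h1, fderiv_fun_add ((df x).fun_mul (dg' x)) ((dg x).fun_mul (df' x)),
    fderiv_fun_mul (df x) (dg' x), fderiv_fun_mul (dg x) (df' x)]
  simp
  ring

theorem lap_lin (N : ℕ) (f g : euc N → ℝ) (hf : ContDiff ℝ 2 f) (hg : ContDiff ℝ 2 g)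
    (a b : ℝ) (x : euc N) :
    lap N (fun y => a * f y + b * g y) x = a * lap N f x + b * lap N g x := by
  rw [lap_eq N _ ((contDiff_const.mul hf).add (contDiff_const.mul hg)), lap_eq N _ hf,
    lap_eq N _ hg, Finset.mul_sum, Finset.mul_sum, ← Finset.sum_add_distrib]
  refine Finset.sum_congr rfl fun i _ => ?_
  have df : Differentiable ℝ f := hf.differentiable (by norm_num)
  have dg : Differentiable ℝ g := hg.differentiable (by norm_num)
  have df' := (contDiff_partial hf (EuclideanSpace.single i 1)).differentiable (by norm_num)
  have dg' := (contDiff_partial hg (EuclideanSpace.single i 1)).differentiable (by norm_num)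
  have h1 : (fun y => fderiv ℝ (fun y => a * f y + b * g y) y (EuclideanSpace.single i 1)) =
      fun y => a * fderiv ℝ f y (EuclideanSpace.single i 1) +
        b * fderiv ℝ g y (EuclideanSpace.single i 1) := by
    ext y
    rw [fderiv_fun_add ((df y).const_mul a) ((dg y).const_mul b), fderiv_const_mul (df y),
      fderiv_const_mul (dg y)]
    simp
  rw [h1, fderiv_fun_add ((df' x).const_mul a) ((dg' x).const_mul b), fderiv_const_mul (df' x),
      fderiv_const_mul (dg' x)]
  simp

theorem fderiv_sq (N : ℕ) (F : ℝ → ℝ) (hF : Differentiable ℝ F) (a x : euc N) (i : Fin N) :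
    fderiv ℝ (fun y => F (‖y - a‖ ^ 2)) x (EuclideanSpace.single i 1) =
      deriv F (‖x - a‖ ^ 2) * (2 * (x i - a i)) := by
  have h1 : HasFDerivAt (fun y : euc N => ‖y - a‖ ^ 2) (2 • (innerSL ℝ (x - a))) x := by
    have := (hasStrictFDerivAt_norm_sq (x - a)).hasFDerivAt.comp x
      ((hasFDerivAt_id x).sub_const a)
    exact this
  have h2 := (hF (‖x - a‖ ^ 2)).hasDerivAt.comp_hasFDerivAt x h1
  have h3 : (fun y => F (‖y - a‖ ^ 2)) = F ∘ (fun y : euc N => ‖y - a‖ ^ 2) := rfl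
  rw [h3, h2.fderiv]
  simp [EuclideanSpace.inner_single_right]

theorem contDiff_sq {N : ℕ} {n : WithTop ℕ∞} {F : ℝ → ℝ} (hF : ContDiff ℝ n F) (a : euc N) :
    ContDiff ℝ n (fun y => F (‖y - a‖ ^ 2)) := by
  have h1 : ContDiff ℝ n (fun y : euc N => ‖y - a‖ ^ 2) :=
    (contDiff_id.sub contDiff_const).norm_sq ℝ
  exact hF.comp h1

theorem lap_sq (N : ℕ) (F : ℝ → ℝ) (hF : ContDiff ℝ 2 F) (a x : euc N) :
    lap N (fun y => F (‖y - a‖ ^ 2)) x =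
      4 * ‖x - a‖ ^ 2 * deriv (deriv F) (‖x - a‖ ^ 2) + 2 * N * deriv F (‖x - a‖ ^ 2) := by
  have hd : Differentiable ℝ F := hF.differentiable (by norm_num)
  have hF1 : ContDiff ℝ 1 (deriv F) := by
    have := (contDiff_succ_iff_deriv (n := 1) (f := F)).1 (by rw [one_add_one_eq_two]; exact hF)
    exact this.2.2
  have hd' : Differentiable ℝ (deriv F) := hF1.differentiable (by norm_num)
  rw [lap_eq N _ (contDiff_sq hF a)]
  have key : ∀ i : Fin N, fderiv ℝ (fun y => fderiv ℝ (fun y => F (‖y - a‖ ^ 2)) y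
      (EuclideanSpace.single i 1)) x (EuclideanSpace.single i 1) =
      4 * deriv (deriv F) (‖x - a‖ ^ 2) * (x i - a i) ^ 2 + 2 * deriv F (‖x - a‖ ^ 2) := by
    intro i
    have h1 : (fun y => fderiv ℝ (fun y => F (‖y - a‖ ^ 2)) y (EuclideanSpace.single i 1)) =
        fun y : euc N => deriv F (‖y - a‖ ^ 2) * (2 * (y i - a i)) := by
      ext y
      exact fderiv_sq N F hd a y i
    have h2 : HasFDerivAt (fun y : euc N => 2 * (y i - a i))
        ((2 : ℝ) • (EuclideanSpace.proj i : euc N →L[ℝ] ℝ)) x := by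
      exact (((EuclideanSpace.proj i : euc N →L[ℝ] ℝ).hasFDerivAt).sub_const (a i)).const_mul 2
    rw [h1, fderiv_fun_mul (((contDiff_sq hF1 a).differentiable (by norm_num)) x)
      h2.differentiableAt, h2.fderiv]
    simp only [add_apply, smul_apply, smul_eq_mul]
    rw [fderiv_sq N (deriv F) hd' a x i]
    simp
    ring
  rw [Finset.sum_congr rfl fun i _ => key i, Finset.sum_add_distrib, ← Finset.mul_sum]
  have : ‖x - a‖ ^ 2 = ∑ i, (x i - a i) ^ 2 := by
    rw [EuclideanSpace.norm_sq_eq]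
    simp
  rw [this]
  simp
  ring

theorem lap_isometry (N : ℕ) (f : euc N → ℝ) (hf : ContDiff ℝ 2 f)
    (A : euc N ≃ₗᵢ[ℝ] euc N) (x : euc N) :
    lap N (fun y => f (A y)) x = lap N f (A x) := by
  have h1 := congrFun (InnerProductSpace.laplacian_eq_iteratedFDeriv_orthonormalBasis f
    (EuclideanSpace.basisFun (Fin N) ℝ)) (A x)
  have h2 := congrFun (InnerProductSpace.laplacian_eq_iteratedFDeriv_orthonormalBasis f
    ((EuclideanSpace.basisFun (Fin N) ℝ).map A)) (A x)
  have h3 : lap N f (A x) = ∑ i, iteratedFDeriv ℝ 2 f (A x)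
      ![A (EuclideanSpace.single i 1), A (EuclideanSpace.single i 1)] := by
    rw [h1] at h2
    simpa [lap] using h2
  rw [h3]
  unfold lap
  refine Finset.sum_congr rfl fun i _ => ?_
  have := (A.toContinuousLinearEquiv : euc N →L[ℝ] euc N).iteratedFDeriv_comp_right
    (f := f) (n := 2) hf x (i := 2) (by norm_num)
  have h4 : (fun y => f (A y)) = f ∘ (A.toContinuousLinearEquiv : euc N →L[ℝ] euc N) := rfl
  rw [h4, this]
  simp only [ContinuousMultilinearMap.compContinuousLinearMap_apply]
  congr 1
  ext j
  fin_cases j <;> rfl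

theorem lap_nonneg_of_isLocalMin (N : ℕ) (f : euc N → ℝ) (hf : ContDiff ℝ 2 f) (x : euc N)
    (hm : IsLocalMin f x) : 0 ≤ lap N f x := by
  rw [lap_eq N f hf]
  refine Finset.sum_nonneg fun i _ => ?_
  by_contra hneg
  push Not at hneg
  set e : euc N := EuclideanSpace.single i 1 with he
  have df : Differentiable ℝ f := hf.differentiable (by norm_num)
  have df' := (contDiff_partial hf e).differentiable (by norm_num)
  let g : ℝ → ℝ := fun t => f (x + t • e)
  have hl : ∀ t : ℝ, HasDerivAt (fun t : ℝ => x + t • e) e t := by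
    intro t
    have := ((hasDerivAt_id t).smul_const e).const_add x
    simpa using this
  have hg1 : ∀ t, HasDerivAt g (fderiv ℝ f (x + t • e) e) t := fun t =>
    (df _).hasFDerivAt.comp_hasDerivAt t (hl t)
  have hg1' : deriv g = fun t => fderiv ℝ f (x + t • e) e := funext fun t => (hg1 t).deriv
  have hg2 : deriv (deriv g) 0 = fderiv ℝ (fun y => fderiv ℝ f y e) x e := by
    rw [hg1']
    have := (df' (x + (0 : ℝ) • e)).hasFDerivAt.comp_hasDerivAt 0 (hl 0)
    have h2 := this.deriv
    simpa [Function.comp_def] using h2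
  have hgm : IsLocalMin g 0 := by
    have hc : ContinuousAt (fun t : ℝ => x + t • e) 0 := (hl 0).continuousAt
    have : Tendsto (fun t : ℝ => x + t • e) (𝓝 0) (𝓝 x) := by
      have := hc.tendsto
      simpa using this
    have h3 := this.eventually hm
    filter_upwards [h3] with t ht
    simpa [g] using ht
  have hgM : IsLocalMax g 0 :=
    isLocalMax_of_deriv_deriv_neg (by rw [hg2]; exact hneg) hgm.deriv_eq_zero
      (hg1 0).continuousAt
  have hconst : g =ᶠ[𝓝 0] fun _ => g 0 := by
    filter_upwards [hgm, hgM] with t h1 h2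
    exact le_antisymm h2 h1
  have h4 : deriv (deriv g) 0 = 0 := by
    have := hconst.deriv.deriv_eq
    rw [this]
    simp
  rw [hg2] at h4
  linarith

theorem lap_congr {N : ℕ} {f g : euc N → ℝ} {x : euc N} (h : f =ᶠ[𝓝 x] g) :
    lap N f x = lap N g x := by
  unfold lap
  rw [(Filter.EventuallyEq.iteratedFDeriv ℝ h 2).eq_of_nhds]

theorem lap_translate (N : ℕ) (f : euc N → ℝ) (c x : euc N) :
    lap N (fun y => f (c + y)) x = lap N f (c + x) := by
  unfold lap
  simp [iteratedFDeriv_comp_add_left]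

/-! Hopf lemma -/

theorem barrier_lap (N : ℕ) (R α : ℝ) (x0 x : euc N) :
    lap N (fun y => (R ^ 2 - ‖y‖ ^ 2) * Real.exp (-α * ‖y - x0‖ ^ 2)) x =
      Real.exp (-α * ‖x - x0‖ ^ 2) * (-(2 * N) + 8 * α * ⟪x, x - x0⟫ +
        (R ^ 2 - ‖x‖ ^ 2) * (4 * α ^ 2 * ‖x - x0‖ ^ 2 - 2 * α * N)) := by
  have hd1 : deriv (fun s : ℝ => R ^ 2 - s) = fun _ => -1 := by
    ext s; simp
  have hd2 : deriv (fun s : ℝ => Real.exp (-α * s)) = fun s => -α * Real.exp (-α * s) := by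
    ext s
    have : HasDerivAt (fun s : ℝ => Real.exp (-α * s)) (Real.exp (-α * s) * (-α * 1)) s :=
      ((hasDerivAt_id s).const_mul (-α)).exp
    rw [this.deriv]; ring
  have hd3 : deriv (fun s : ℝ => -α * Real.exp (-α * s)) =
      fun s => α ^ 2 * Real.exp (-α * s) := by
    ext s
    have : HasDerivAt (fun s : ℝ => -α * Real.exp (-α * s))
        (-α * (Real.exp (-α * s) * (-α * 1))) s :=
      (((hasDerivAt_id s).const_mul (-α)).exp).const_mul (-α)
    rw [this.deriv]; ring
  have c1 : ContDiff ℝ 2 (fun s : ℝ => R ^ 2 - s) := by fun_prop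
  have c2 : ContDiff ℝ 2 (fun s : ℝ => Real.exp (-α * s)) := by fun_prop
  have e1 : (fun y : euc N => (R ^ 2 - ‖y‖ ^ 2) * Real.exp (-α * ‖y - x0‖ ^ 2)) =
      fun y => (fun y => (fun s : ℝ => R ^ 2 - s) (‖y - 0‖ ^ 2)) y *
        (fun y => (fun s : ℝ => Real.exp (-α * s)) (‖y - x0‖ ^ 2)) y := by
    ext y; simp
  rw [e1, lap_mul N _ _ (contDiff_sq c1 0) (contDiff_sq c2 x0), lap_sq N _ c1, lap_sq N _ c2,
    Finset.sum_congr rfl fun i _ => by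
      rw [fderiv_sq N _ (c1.differentiable (by norm_num)),
        fderiv_sq N _ (c2.differentiable (by norm_num))]]
  rw [hd1, hd2, hd3]
  have hin : ⟪x, x - x0⟫ = ∑ i, x i * (x i - x0 i) := by
    simp [PiLp.inner_apply, mul_comm]
  rw [hin]
  simp only [sub_zero, PiLp.zero_apply, deriv_const]
  rw [show ∑ i, 2 * (-1 * (2 * x i) * (-α * Real.exp (-α * ‖x - x0‖ ^ 2) * (2 * (x i - x0 i)))) =
    (8 * α * Real.exp (-α * ‖x - x0‖ ^ 2)) * ∑ i, x i * (x i - x0 i) by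
      rw [Finset.mul_sum]; exact Finset.sum_congr rfl fun i _ => by ring]
  ring

set_option maxHeartbeats 1000000 in
theorem hopf (N : ℕ) (R : ℝ) (hR : 0 < R) (f : euc N → ℝ) (hf : ContDiff ℝ 2 f)
    (hlap : ∀ x ∈ ball (0 : euc N) R, lap N f x ≤ 0)
    (hpos : ∀ x ∈ ball (0 : euc N) R, 0 ≤ f x)
    (x0 : euc N) (hx0 : x0 ∈ ball (0 : euc N) R) (hfx0 : 0 < f x0) :
    ∃ ε > 0, ∀ x ∈ ball (0 : euc N) R, ε * (R ^ 2 - ‖x‖ ^ 2) ≤ f x := by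
  have fc : Continuous f := hf.continuous
  have ha : ‖x0‖ < R := by simpa using hx0
  have ha0 := norm_nonneg x0
  obtain ⟨ρ, hρ, hm⟩ : ∃ ρ > 0, ∀ x ∈ ball x0 ρ, f x0 / 2 < f x := by
    have : ∀ᶠ x in 𝓝 x0, f x0 / 2 < f x :=
      (fc.tendsto x0).eventually (lt_mem_nhds (by linarith))
    exact Metric.eventually_nhds_iff_ball.1 this
  set r1 := (R + ‖x0‖) / 2 with hr1
  set κ := r1 * (r1 - ‖x0‖) with hκ
  set η := R ^ 2 - r1 ^ 2 with hη
  have κpos : 0 < κ := mul_pos (by linarith) (by linarith)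
  have ηpos : 0 < η := by
    have : r1 < R := by linarith
    have : 0 < r1 := by linarith
    nlinarith
  set K := (4 * R ^ 2 + N + 1) / η with hK
  have hKη : η * K = 4 * R ^ 2 + N + 1 := by rw [hK]; field_simp
  have Kpos : 0 < K := by positivity
  set α := 1 + (N + K) / (2 * ρ ^ 2) + N / (4 * κ) with hα
  have hα1 : 1 ≤ α := by
    have h1 : 0 ≤ (N + K) / (2 * ρ ^ 2) := by positivity
    have h2 : 0 ≤ N / (4 * κ) := by positivity
    linarith
  have hαρ : N + K ≤ 2 * α * ρ ^ 2 := by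
    have h2 : 0 ≤ N / (4 * κ) := by positivity
    have : (N + K) / (2 * ρ ^ 2) ≤ α := by linarith
    rw [div_le_iff₀ (by positivity)] at this
    linarith
  have hακ : 2 * N < 8 * α * κ := by
    have h1 : 0 ≤ (N + K) / (2 * ρ ^ 2) := by positivity
    have : N / (4 * κ) < α := by linarith
    rw [div_lt_iff₀ (by positivity)] at this
    linarith
  let b : euc N → ℝ := fun y => (R ^ 2 - ‖y‖ ^ 2) * Real.exp (-α * ‖y - x0‖ ^ 2)
  have hbc : ContDiff ℝ 2 b := by
    have h1 : ContDiff ℝ 2 (fun y : euc N => ‖y‖ ^ 2) := contDiff_id.norm_sq ℝ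
    have h2 : ContDiff ℝ 2 (fun y : euc N => ‖y - x0‖ ^ 2) :=
      (contDiff_id.sub contDiff_const).norm_sq ℝ
    exact (contDiff_const.sub h1).mul (contDiff_const.mul h2).exp
  have hblap : ∀ x ∈ ball (0 : euc N) R, x ∉ ball x0 ρ → 0 < lap N b x := by
    intro x hx hx'
    rw [barrier_lap]
    apply mul_pos (Real.exp_pos _)
    have hxR : ‖x‖ < R := by simpa using hx
    have hxn := norm_nonneg x
    have he : ρ ≤ ‖x - x0‖ := by simpa [dist_eq_norm] using hx'
    have he2 : ρ ^ 2 ≤ ‖x - x0‖ ^ 2 := by gcongr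
    have hin : ‖x‖ ^ 2 - ‖x‖ * ‖x0‖ ≤ ⟪x, x - x0⟫ := by
      rw [inner_sub_right, real_inner_self_eq_norm_sq]
      linarith [real_inner_le_norm x x0]
    have hd : 0 < R ^ 2 - ‖x‖ ^ 2 := by nlinarith
    have hK2 : 2 * α * K ≤ 4 * α ^ 2 * ‖x - x0‖ ^ 2 - 2 * α * N := by
      have h1 : 2 * α * (N + K) ≤ 2 * α * (2 * α * ‖x - x0‖ ^ 2) := by
        apply mul_le_mul_of_nonneg_left _ (by linarith)
        calc N + K ≤ 2 * α * ρ ^ 2 := hαρ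
          _ ≤ _ := by gcongr
      nlinarith
    rcases le_or_gt r1 ‖x‖ with h | h
    · have h1 : κ ≤ ⟪x, x - x0⟫ := by
        have : κ ≤ ‖x‖ * (‖x‖ - ‖x0‖) := by
          rw [hκ]
          apply mul_le_mul h (by linarith) (by linarith) (by linarith)
        nlinarith
      have h2 : 8 * α * κ ≤ 8 * α * ⟪x, x - x0⟫ := by gcongr
      have h3 : 0 ≤ (R ^ 2 - ‖x‖ ^ 2) * (4 * α ^ 2 * ‖x - x0‖ ^ 2 - 2 * α * N) :=
        mul_nonneg hd.le (le_trans (by positivity) hK2)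
      linarith
    · have h1 : -(R ^ 2) ≤ ⟪x, x - x0⟫ := by
        have : ‖x‖ * ‖x0‖ ≤ R * R := mul_le_mul hxR.le ha.le ha0 hR.le
        nlinarith [sq_nonneg ‖x‖]
      have h2 : 8 * α * (-(R ^ 2)) ≤ 8 * α * ⟪x, x - x0⟫ := by gcongr
      have h3 : η ≤ R ^ 2 - ‖x‖ ^ 2 := by
        rw [hη]
        have : ‖x‖ ^ 2 ≤ r1 ^ 2 := by gcongr
        linarith
      have h4 : η * (2 * α * K) ≤
          (R ^ 2 - ‖x‖ ^ 2) * (4 * α ^ 2 * ‖x - x0‖ ^ 2 - 2 * α * N) :=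
        mul_le_mul h3 hK2 (by positivity) hd.le
      have h5 : η * (2 * α * K) = 2 * α * (4 * R ^ 2 + N + 1) := by rw [← hKη]; ring
      have h6 : (N : ℝ) ≤ α * N := le_mul_of_one_le_left (by positivity) hα1
      linarith
  set m := f x0 / 2 with hmdef
  have mpos : 0 < m := by linarith
  set ε := m / R ^ 2 with hε
  have εpos : 0 < ε := by positivity
  have hεR : ε * R ^ 2 = m := by rw [hε]; field_simp
  have hexp : ∀ x : euc N, Real.exp (-α * ‖x - x0‖ ^ 2) ≤ 1 := by
    intro x
    rw [Real.exp_le_one_iff]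
    have : 0 ≤ α * ‖x - x0‖ ^ 2 := by positivity
    linarith
  let g : euc N → ℝ := fun y => 1 * f y + (-ε) * b y
  have hgc : ContDiff ℝ 2 g := (contDiff_const.mul hf).add (contDiff_const.mul hbc)
  have hfcl : ∀ x ∈ closedBall (0 : euc N) R, 0 ≤ f x := by
    intro x hx
    rw [← closure_ball (0 : euc N) hR.ne'] at hx
    exact closure_minimal (fun y hy => hpos y hy) (isClosed_le continuous_const fc) hx
  have hg : ∀ x ∈ closedBall (0 : euc N) R, 0 ≤ g x := by
    obtain ⟨p, hp, hpm⟩ := (isCompact_closedBall (0 : euc N) R).exists_isMinOn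
      ⟨0, by simp [hR.le]⟩ hgc.continuous.continuousOn
    suffices 0 ≤ g p from fun x hx => this.trans (hpm hx)
    by_contra hneg
    push Not at hneg
    have hpn : ‖p‖ ≤ R := by simpa using hp
    have hpR : ‖p‖ < R := by
      rcases hpn.lt_or_eq with h | h
      · exact h
      · exfalso
        have : g p = f p := by simp [g, b, h]
        linarith [hfcl p hp]
    have hp0 : p ∉ ball x0 ρ := by
      intro hpb
      have h1 := hm p hpb
      have h2 : b p ≤ R ^ 2 := by
        have h3 : 0 ≤ R ^ 2 - ‖p‖ ^ 2 := by nlinarith [norm_nonneg p]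
        calc b p ≤ (R ^ 2 - ‖p‖ ^ 2) * 1 := mul_le_mul_of_nonneg_left (hexp p) h3
          _ ≤ R ^ 2 := by nlinarith [sq_nonneg ‖p‖]
      have h3 : ε * b p ≤ ε * R ^ 2 := by gcongr
      have h4 : g p = f p - ε * b p := by simp only [g]; ring
      linarith
    have hpb : p ∈ ball (0 : euc N) R := by simpa using hpR
    have hloc : IsLocalMin g p := by
      apply hpm.isLocalMin
      exact mem_of_superset (isOpen_ball.mem_nhds hpb) ball_subset_closedBall
    have h1 := lap_nonneg_of_isLocalMin N g hgc p hloc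
    rw [lap_lin N f b hf hbc] at h1
    have h2 := hlap p hpb
    have h3 := mul_pos εpos (hblap p hpb hp0)
    linarith
  refine ⟨ε * Real.exp (-α * (2 * R) ^ 2), by positivity, fun x hx => ?_⟩
  have h1 := hg x (ball_subset_closedBall hx)
  have hxR : ‖x‖ < R := by simpa using hx
  have hd : 0 ≤ R ^ 2 - ‖x‖ ^ 2 := by nlinarith [norm_nonneg x]
  have h2 : Real.exp (-α * (2 * R) ^ 2) ≤ Real.exp (-α * ‖x - x0‖ ^ 2) := by
    rw [Real.exp_le_exp]
    have h3 : ‖x - x0‖ ≤ 2 * R := by linarith [norm_sub_le x x0]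
    have h4 : ‖x - x0‖ ^ 2 ≤ (2 * R) ^ 2 := by gcongr
    nlinarith
  have h3 : ε * Real.exp (-α * (2 * R) ^ 2) * (R ^ 2 - ‖x‖ ^ 2) ≤ ε * b x := by
    have : Real.exp (-α * (2 * R) ^ 2) * (R ^ 2 - ‖x‖ ^ 2) ≤ b x := by
      simp only [b]
      rw [mul_comm]
      gcongr
    calc _ = ε * (Real.exp (-α * (2 * R) ^ 2) * (R ^ 2 - ‖x‖ ^ 2)) := by ring
      _ ≤ _ := by gcongr
  have h4 : g x = f x - ε * b x := by simp only [g]; ring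
  linarith

theorem bdry_lip (N : ℕ) (R : ℝ) (hR : 0 < R) (f : euc N → ℝ) (hf : ContDiff ℝ 2 f)
    (h0 : ∀ x : euc N, ‖x‖ = R → f x = 0) :
    ∃ C > 0, ∀ x ∈ ball (0 : euc N) R, |f x| ≤ C * (R ^ 2 - ‖x‖ ^ 2) := by
  obtain ⟨L, hL⟩ := (isCompact_closedBall (0 : euc N) R).exists_bound_of_continuousOn
    (f := fderiv ℝ f) (hf.continuous_fderiv (by norm_num)).continuousOn
  have hL0 : 0 ≤ L := (norm_nonneg _).trans (hL 0 (by simp [hR.le]))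
  have hlip : ∀ x ∈ closedBall (0 : euc N) R, ∀ y ∈ closedBall (0 : euc N) R,
      ‖f y - f x‖ ≤ L * ‖y - x‖ := fun x hx y hy =>
    (convex_closedBall (0 : euc N) R).norm_image_sub_le_of_norm_fderiv_le
      (fun z _ => (hf.differentiable (by norm_num)) z) hL hx hy
  have hf0 : ∃ M, 0 ≤ M ∧ |f 0| ≤ M * R ^ 2 :=
    ⟨|f 0| / R ^ 2, by positivity, by rw [div_mul_cancel₀]; positivity⟩
  obtain ⟨M, hM0, hM⟩ := hf0
  refine ⟨L / R + M + 1, by positivity, fun x hx => ?_⟩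
  have hxR : ‖x‖ < R := by simpa using hx
  have hd : 0 ≤ R ^ 2 - ‖x‖ ^ 2 := by nlinarith [norm_nonneg x]
  rcases eq_or_ne x 0 with rfl | hx0
  · have h1 : 0 ≤ L / R := by positivity
    simp only [norm_zero] at *
    nlinarith [sq_nonneg R]
  · have hn : 0 < ‖x‖ := norm_pos_iff.2 hx0
    have hy : ‖(R / ‖x‖) • x‖ = R := by
      rw [norm_smul, Real.norm_of_nonneg (by positivity)]; field_simp
    have h1 := hlip ((R / ‖x‖) • x) (by simp [hy]) x (ball_subset_closedBall hx)
    rw [h0 _ hy, sub_zero] at h1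
    have h2 : ‖x - (R / ‖x‖) • x‖ = R - ‖x‖ := by
      have : x - (R / ‖x‖) • x = -((R / ‖x‖ - 1) • x) := by rw [sub_smul]; simp
      have h3 : 0 ≤ R / ‖x‖ - 1 := by
        rw [sub_nonneg, le_div_iff₀ hn]; linarith
      rw [this, norm_neg, norm_smul, Real.norm_of_nonneg h3]
      field_simp
    rw [h2, Real.norm_eq_abs] at h1
    have h3 : L * (R - ‖x‖) ≤ L / R * (R ^ 2 - ‖x‖ ^ 2) := by
      have : L / R * (R ^ 2 - ‖x‖ ^ 2) = L * (R - ‖x‖) + L / R * (‖x‖ * (R - ‖x‖)) := by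
        field_simp; ring
      rw [this]
      have : 0 ≤ L / R * (‖x‖ * (R - ‖x‖)) :=
        mul_nonneg (by positivity) (mul_nonneg hn.le (by linarith))
      linarith
    nlinarith [mul_nonneg hM0 hd]

theorem eigen_unique (N : ℕ) (R : ℝ) (hR : 0 < R) (u w : euc N → ℝ)
    (hu : ContDiff ℝ 2 u) (hw : ContDiff ℝ 2 w) (lam : ℝ) (hlam : 0 ≤ lam)
    (hu0 : ∀ x : euc N, ‖x‖ = R → u x = 0) (hw0 : ∀ x : euc N, ‖x‖ = R → w x = 0)
    (hupos : ∀ x ∈ ball (0 : euc N) R, 0 < u x)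
    (hul : ∀ x ∈ ball (0 : euc N) R, -lap N u x = lam * u x)
    (hwl : ∀ x ∈ ball (0 : euc N) R, -lap N w x = lam * w x) :
    ∃ s : ℝ, ∀ x ∈ ball (0 : euc N) R, w x = s * u x := by
  have h0b : (0 : euc N) ∈ ball (0 : euc N) R := by simp [hR]
  obtain ⟨ε, εpos, hε⟩ := hopf N R hR u hu
    (fun x hx => by nlinarith [hul x hx, mul_nonneg hlam (hupos x hx).le])
    (fun x hx => (hupos x hx).le) 0 h0b (hupos 0 h0b)
  obtain ⟨C, Cpos, hC⟩ := bdry_lip N R hR w hw hw0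
  obtain ⟨C', Cpos', hC'⟩ := bdry_lip N R hR u hu hu0
  let S : Set ℝ := {s | ∀ x ∈ ball (0 : euc N) R, w x ≤ s * u x}
  have hSne : S.Nonempty := by
    refine ⟨C / ε, fun x hx => ?_⟩
    have h1 := hε x hx
    have h2 := (abs_le.1 (hC x hx)).2
    have h3 : C / ε * (ε * (R ^ 2 - ‖x‖ ^ 2)) ≤ C / ε * u x := by gcongr
    have h4 : C / ε * (ε * (R ^ 2 - ‖x‖ ^ 2)) = C * (R ^ 2 - ‖x‖ ^ 2) := by field_simp
    linarith
  have hSb : BddBelow S := by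
    refine ⟨w 0 / u 0, fun s hs => ?_⟩
    rw [div_le_iff₀ (hupos 0 h0b)]
    exact hs 0 h0b
  have hSc : IsClosed S := by
    have : S = ⋂ x ∈ ball (0 : euc N) R, {s | w x ≤ s * u x} := by
      ext s; simp [S]
    rw [this]
    refine isClosed_biInter fun x _ => isClosed_le continuous_const (by fun_prop)
  set s := sInf S with hs
  have hsS : s ∈ S := hSc.csInf_mem hSne hSb
  refine ⟨s, ?_⟩
  by_contra hcon
  push Not at hcon
  obtain ⟨x0, hx0, hne⟩ := hcon
  let y : euc N → ℝ := fun x => s * u x + (-1) * w x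
  have hyc : ContDiff ℝ 2 y := (contDiff_const.mul hu).add (contDiff_const.mul hw)
  have hy0 : ∀ x ∈ ball (0 : euc N) R, 0 ≤ y x := fun x hx => by
    have := hsS x hx
    simp only [y]; linarith
  obtain ⟨ε', εpos', hε'⟩ := hopf N R hR y hyc
    (fun x hx => by
      rw [lap_lin N u w hu hw]
      have h1 := hul x hx
      have h2 := hwl x hx
      have h3 := mul_nonneg hlam (hy0 x hx)
      simp only [y] at h3
      have : s * lap N u x + -1 * lap N w x = -(lam * (s * u x + (-1) * w x)) := by
        linear_combination (-s) * h1 + h2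
      linarith)
    hy0 x0 hx0 (lt_of_le_of_ne (hy0 x0 hx0) (by
      simp only [y]
      intro h; apply hne; linarith))
  have hmem : s - ε' / C' ∈ S := by
    intro x hx
    have h1 := hε' x hx
    have h2 := (abs_le.1 (hC' x hx)).2
    have h3 : ε' / C' * u x ≤ ε' / C' * (C' * (R ^ 2 - ‖x‖ ^ 2)) := by gcongr
    have h4 : ε' / C' * (C' * (R ^ 2 - ‖x‖ ^ 2)) = ε' * (R ^ 2 - ‖x‖ ^ 2) := by field_simp
    simp only [y] at h1
    linarith
  have h1 := csInf_le hSb hmem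
  have h2 : 0 < ε' / C' := by positivity
  linarith

theorem exists_isometry (N : ℕ) (x y : euc N) (h : ‖x‖ = ‖y‖) :
    ∃ A : euc N ≃ₗᵢ[ℝ] euc N, A x = y :=
  ⟨_, Submodule.reflection_sub h⟩

theorem eigen_radial (N : ℕ) (R : ℝ) (hR : 0 < R) (u : euc N → ℝ)
    (hu : ContDiff ℝ 2 u) (lam : ℝ) (hlam : 0 ≤ lam)
    (hu0 : ∀ x : euc N, ‖x‖ = R → u x = 0)
    (hupos : ∀ x ∈ ball (0 : euc N) R, 0 < u x)
    (hul : ∀ x ∈ ball (0 : euc N) R, -lap N u x = lam * u x)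
    (x y : euc N) (hxy : ‖x‖ = ‖y‖) (hx : ‖x‖ ≤ R) : u x = u y := by
  rcases hx.lt_or_eq with hx | hx
  · obtain ⟨A, hA⟩ := exists_isometry N x y hxy
    have h0b : (0 : euc N) ∈ ball (0 : euc N) R := by simp [hR]
    obtain ⟨s, hs⟩ := eigen_unique N R hR u (fun z => u (A z)) hu
      (hu.comp A.contDiff) lam hlam hu0
      (fun z hz => hu0 _ (by simpa using hz)) hupos hul
      (fun z hz => by
        rw [lap_isometry N u hu A]
        exact hul _ (by simpa using hz))
    have h1 := hs 0 h0b
    simp only [map_zero] at h1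
    have h2 : s = 1 := by
      have := hupos 0 h0b
      field_simp at h1
      linarith
    have h3 := hs x (by simpa using hx)
    simp only [hA, h2, one_mul] at h3
    exact h3.symm
  · rw [hu0 x hx, hu0 y (hxy ▸ hx)]

theorem exists_unit (N : ℕ) (hN : 2 ≤ N) : ∃ w : euc N, ‖w‖ = 1 :=
  ⟨EuclideanSpace.single ⟨0, by omega⟩ 1, by simp⟩

theorem ray_deriv {N : ℕ} {u : euc N → ℝ} (hu : ContDiff ℝ 2 u) (w : euc N) (r : ℝ) :
    HasDerivAt (fun s : ℝ => u (s • w)) (fderiv ℝ u (r • w) w) r := by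
  have h1 : HasDerivAt (fun s : ℝ => s • w) w r := by
    simpa using (hasDerivAt_id r).smul_const w
  exact ((hu.differentiable (by norm_num)) _).hasFDerivAt.comp_hasDerivAt r h1

theorem bdry_grad (N : ℕ) (hN : 2 ≤ N) (R : ℝ) (hR : 0 < R) (u : euc N → ℝ)
    (hu : ContDiff ℝ 2 u) (lam : ℝ) (hlam : 0 ≤ lam)
    (hu0 : ∀ x : euc N, ‖x‖ = R → u x = 0)
    (hupos : ∀ x ∈ ball (0 : euc N) R, 0 < u x)
    (hul : ∀ x ∈ ball (0 : euc N) R, -lap N u x = lam * u x) :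
    ∃ g > 0, ∀ w : euc N, ‖w‖ = 1 → fderiv ℝ u (R • w) w = -g := by
  obtain ⟨w0, hw0⟩ := exists_unit N hN
  have h0b : (0 : euc N) ∈ ball (0 : euc N) R := by simp [hR]
  refine ⟨-fderiv ℝ u (R • w0) w0, ?_, ?_⟩
  · obtain ⟨ε, εpos, hε⟩ := hopf N R hR u hu
      (fun x hx => by nlinarith [hul x hx, mul_nonneg hlam (hupos x hx).le])
      (fun x hx => (hupos x hx).le) 0 h0b (hupos 0 h0b)
    have h1 : HasDerivAt (fun r : ℝ => u (r • w0) - ε * (R ^ 2 - r ^ 2))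
        (fderiv ℝ u (R • w0) w0 - ε * (-(2 * R))) R := by
      have := ((hasDerivAt_pow 2 R).const_sub (R ^ 2)).const_mul ε
      have h2 := (ray_deriv hu w0 R).sub this
      have h3 : HasDerivAt (fun r : ℝ => u (r • w0) - ε * (R ^ 2 - r ^ 2)) _ R := h2
      exact h3.congr_deriv (by norm_num)
    have h2 := (hasDerivWithinAt_iff_tendsto_slope' (s := Iio R) (by simp)).1
      h1.hasDerivWithinAt
    have h3 : ∀ᶠ r in 𝓝[<] R,
        slope (fun r : ℝ => u (r • w0) - ε * (R ^ 2 - r ^ 2)) R r ≤ 0 := by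
      have : Ioo 0 R ∈ 𝓝[<] R := Ioo_mem_nhdsLT hR
      filter_upwards [this] with r hr
      have hn : ‖r • w0‖ = r := by rw [norm_smul, hw0, Real.norm_of_nonneg hr.1.le, mul_one]
      have h4 := hε (r • w0) (by simpa [hn] using hr.2)
      rw [hn] at h4
      rw [slope_def_field]
      apply div_nonpos_of_nonneg_of_nonpos
      · rw [hu0 (R • w0) (by rw [norm_smul, hw0, Real.norm_of_nonneg hR.le, mul_one])]
        linarith
      · linarith [hr.2]
    have h4 := le_of_tendsto h2 h3
    have h5 : 0 < ε * (2 * R) := by positivity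
    linarith
  · intro w hw
    rw [neg_neg]
    have h1 := (ray_deriv hu w R).hasDerivWithinAt (s := Icc 0 R)
    have h2 := (ray_deriv hu w0 R).hasDerivWithinAt (s := Icc 0 R)
    have h3 : HasDerivWithinAt (fun s : ℝ => u (s • w)) (fderiv ℝ u (R • w0) w0) (Icc 0 R) R := by
      apply h2.congr_of_mem _ (by simp [hR.le])
      intro s hs
      apply eigen_radial N R hR u hu lam hlam hu0 hupos hul
      · rw [norm_smul, norm_smul, hw, hw0]
      · rw [norm_smul, hw, Real.norm_of_nonneg hs.1]; linarith [hs.2]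
    exact ((uniqueDiffOn_Icc hR) R (by simp [hR.le])).eq_deriv _ h1 h3

theorem bdry_exp (N : ℕ) (R : ℝ) (hR : 0 < R) (u : euc N → ℝ)
    (hu : ContDiff ℝ 2 u) (hu0 : ∀ x : euc N, ‖x‖ = R → u x = 0) (g : ℝ)
    (hg : ∀ w : euc N, ‖w‖ = 1 → fderiv ℝ u (R • w) w = -g) (ε : ℝ) (hε : 0 < ε) :
    ∃ η > 0, η < R ∧ ∀ w : euc N, ‖w‖ = 1 → ∀ r, |r - R| ≤ η →
      |u (r • w) + g * (r - R)| ≤ ε * |r - R| := by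
  have huc := (isCompact_closedBall (0 : euc N) (2 * R)).uniformContinuousOn_of_continuous
    (f := fderiv ℝ u) (hu.continuous_fderiv (by norm_num)).continuousOn
  obtain ⟨η, ηpos, hη⟩ := Metric.uniformContinuousOn_iff.1 huc ε hε
  refine ⟨min (η / 2) (R / 2), by positivity, by linarith [min_le_right (η / 2) (R / 2)], ?_⟩
  intro w hw r hr
  set ζ := min (η / 2) (R / 2) with hζ
  have z1 : ζ ≤ η / 2 := min_le_left _ _
  have z2 : ζ ≤ R / 2 := min_le_right _ _
  have hζ0 : 0 < ζ := by positivity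
  have hd : ∀ s ∈ Icc (R - ζ) (R + ζ), HasDerivWithinAt (fun s : ℝ => u (s • w) + g * (s - R))
      (fderiv ℝ u (s • w) w + g) (Icc (R - ζ) (R + ζ)) s := by
    intro s _
    have := (((hasDerivAt_id s).sub_const R).const_mul g)
    have h2 := (ray_deriv hu w s).add this
    simp only [mul_one] at h2
    exact h2.hasDerivWithinAt
  have hb : ∀ s ∈ Icc (R - ζ) (R + ζ), ‖fderiv ℝ u (s • w) w + g‖ ≤ ε := by
    intro s hs
    have hs0 : 0 ≤ s := by linarith [hs.1]
    have h1 := hη (s • w)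
      (by simp [norm_smul, hw, abs_of_nonneg hs0]; linarith [hs.2]) (R • w)
      (by simp [norm_smul, hw, abs_of_pos hR]; linarith) (by
        rw [dist_eq_norm, ← sub_smul, norm_smul, hw, mul_one, Real.norm_eq_abs, abs_lt]
        constructor <;> linarith [hs.1, hs.2])
    rw [dist_eq_norm] at h1
    have h2 : fderiv ℝ u (s • w) w + g = (fderiv ℝ u (s • w) - fderiv ℝ u (R • w)) w := by
      simp [hg w hw]
    rw [h2]
    have h3 := (fderiv ℝ u (s • w) - fderiv ℝ u (R • w)).le_opNorm w
    rw [hw, mul_one] at h3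
    linarith
  have := (convex_Icc (R - ζ) (R + ζ)).norm_image_sub_le_of_norm_hasDerivWithin_le hd hb
    (x := R) (y := r) ⟨by linarith, by linarith⟩
    ⟨by linarith [(abs_le.1 hr).1], by linarith [(abs_le.1 hr).2]⟩
  simpa [hu0 (R • w) (by rw [norm_smul, hw, Real.norm_of_nonneg hR.le, mul_one])] using this

theorem time_exp (N : ℕ) (δ : ℝ) (hδ : 0 < δ) (u : ℝ → euc N → ℝ)
    (hu : ContDiffOn ℝ (⊤ : ℕ∞) (fun p : ℝ × euc N => u p.1 p.2) (Ico (0 : ℝ) δ ×ˢ univ)) :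
    ∃ v : euc N → ℝ, Continuous v ∧ ∀ K : Set (euc N), IsCompact K → ∀ ε > 0,
      ∀ᶠ t in 𝓝[>] (0 : ℝ), ∀ x ∈ K, |u t x - u 0 x - t * v x| ≤ ε * t := by
  set S : Set (ℝ × euc N) := Ico (0 : ℝ) δ ×ˢ univ with hS
  have hSu : UniqueDiffOn ℝ S := (uniqueDiffOn_Ico 0 δ).prod uniqueDiffOn_univ
  set U : ℝ × euc N → ℝ := fun p => u p.1 p.2 with hU
  let W : ℝ × euc N → ℝ := fun p => fderivWithin ℝ U S p (1, 0)
  have hW : ContinuousOn W S := by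
    have h1 := hu.continuousOn_fderivWithin hSu (by simp)
    exact h1.clm_apply continuousOn_const
  refine ⟨fun x => W (0, x), ?_, ?_⟩
  · rw [← continuousOn_univ]
    apply hW.comp (f := fun x : euc N => ((0 : ℝ), x)) (by fun_prop)
    intro x _
    simp [hS, hδ]
  · intro K hK ε hε
    have hC : IsCompact (Icc (0 : ℝ) (δ / 2) ×ˢ K) := isCompact_Icc.prod hK
    have hCS : Icc (0 : ℝ) (δ / 2) ×ˢ K ⊆ S := by
      rintro ⟨t, x⟩ ⟨ht, _⟩
      refine ⟨⟨ht.1, ?_⟩, trivial⟩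
      have := ht.2
      simp only at this ⊢
      linarith
    obtain ⟨η, ηpos, hη⟩ := Metric.uniformContinuousOn_iff.1
      (hC.uniformContinuousOn_of_continuous (hW.mono hCS)) ε hε
    have : Ioo 0 (min η (δ / 2)) ∈ 𝓝[>] (0 : ℝ) := Ioo_mem_nhdsGT (by positivity)
    filter_upwards [this] with t ht x hx
    have t1 : t < η := ht.2.trans_le (min_le_left _ _)
    have t2 : t < δ / 2 := ht.2.trans_le (min_le_right _ _)
    have hd : ∀ s ∈ Icc 0 t, HasDerivWithinAt (fun s : ℝ => u s x - s * W (0, x))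
        (W (s, x) - W (0, x)) (Icc 0 t) s := by
      intro s hs
      have hsS : ((s, x) : ℝ × euc N) ∈ S := ⟨⟨hs.1, by simp only; linarith [hs.2]⟩, trivial⟩
      have h1 : HasFDerivWithinAt U (fderivWithin ℝ U S (s, x)) S (s, x) :=
        ((hu.differentiableOn (by simp)) _ hsS).hasFDerivWithinAt
      have h2 : HasDerivWithinAt (fun s : ℝ => (s, x)) ((1 : ℝ), (0 : euc N)) (Icc 0 t) s :=
        ((hasDerivAt_id s).prodMk (hasDerivAt_const s x)).hasDerivWithinAt
      have h3 := h1.comp_hasDerivWithinAt (t := S) s h2 (by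
        intro s' hs'
        exact ⟨⟨hs'.1, by simp only; linarith [hs'.2]⟩, trivial⟩)
      have h4 := ((hasDerivAt_id s).mul_const (W (0, x))).hasDerivWithinAt (s := Icc 0 t)
      have h5 := h3.sub h4
      simp only [one_mul] at h5
      exact h5
    have hb : ∀ s ∈ Icc 0 t, ‖W (s, x) - W (0, x)‖ ≤ ε := by
      intro s hs
      have := hη (s, x) ⟨⟨hs.1, by simp only; linarith [hs.2]⟩, hx⟩ (0, x)
        ⟨⟨le_rfl, by simp only; linarith⟩, hx⟩ (by
          simp [Prod.dist_eq, abs_of_nonneg hs.1, ηpos]; linarith [hs.2])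
      rw [Real.dist_eq] at this
      exact this.le
    have := (convex_Icc 0 t).norm_image_sub_le_of_norm_hasDerivWithin_le hd hb
      (x := 0) (y := t) ⟨le_rfl, ht.1.le⟩ ⟨ht.1.le, le_rfl⟩
    simp only [zero_mul, sub_zero, Real.norm_eq_abs, abs_of_pos ht.1] at this
    rw [show u t x - u 0 x - t * W (0, x) = u t x - t * W (0, x) - u 0 x by ring]
    exact this

theorem signs (N : ℕ) (R : ℝ) (hR : 0 < R) (u : ℝ → euc N → ℝ) (v : euc N → ℝ)
    (g : ℝ) (hg : 0 < g)
    (hexp : ∀ ε > 0, ∃ η > 0, η < R ∧ ∀ w : euc N, ‖w‖ = 1 → ∀ r, |r - R| ≤ η →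
      |u 0 (r • w) + g * (r - R)| ≤ ε * |r - R|)
    (hv : Continuous v) (hu0 : Continuous (u 0))
    (htime : ∀ K : Set (euc N), IsCompact K → ∀ ε > 0,
      ∀ᶠ t in 𝓝[>] (0 : ℝ), ∀ x ∈ K, |u t x - u 0 x - t * v x| ≤ ε * t)
    (hpos0 : ∀ x ∈ ball (0 : euc N) R, 0 < u 0 x) (ε : ℝ) (hε : 0 < ε) :
    (∀ᶠ t in 𝓝[>] (0 : ℝ), ∀ w : euc N, ‖w‖ = 1 → ∀ r, 0 ≤ r →
      r < R + t * (v (R • w) / g - ε) → 0 < u t (r • w)) ∧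
    ∃ η > 0, ∀ᶠ t in 𝓝[>] (0 : ℝ), ∀ w : euc N, ‖w‖ = 1 → ∀ r,
      R + t * (v (R • w) / g + ε) ≤ r → r ≤ R + η → u t (r • w) < 0 := by
  have hKc := isCompact_closedBall (0 : euc N) (2 * R)
  obtain ⟨M, hM⟩ := hKc.exists_bound_of_continuousOn hv.continuousOn
  have hM0 : 0 ≤ M := (norm_nonneg _).trans (hM 0 (by simp [hR.le]))
  set C := M / g + ε with hC
  have Cpos : 0 < C := by positivity
  set e2 := min (g / 2) (ε * g / (4 * C)) with he2
  have e2pos : 0 < e2 := by positivity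
  have e2a : e2 ≤ g / 2 := min_le_left _ _
  have e2b : e2 * C ≤ ε * g / 4 := by
    have : e2 ≤ ε * g / (4 * C) := min_le_right _ _
    calc e2 * C ≤ ε * g / (4 * C) * C := by gcongr
      _ = ε * g / 4 := by field_simp
  obtain ⟨η1, η1pos, hη1R, hη1⟩ := hexp e2 e2pos
  obtain ⟨η2, η2pos, hη2⟩ := Metric.uniformContinuousOn_iff.1
    (hKc.uniformContinuousOn_of_continuous hv.continuousOn) (ε * g / 4) (by positivity)
  set η := min η1 (η2 / 2) with hη
  have ηpos : 0 < η := by positivity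
  have ηa : η ≤ η1 := min_le_left _ _
  have ηb : η ≤ η2 / 2 := min_le_right _ _
  have hvnear : ∀ w : euc N, ‖w‖ = 1 → ∀ r, |r - R| ≤ η →
      |v (r • w) - v (R • w)| ≤ ε * g / 4 := by
    intro w hw r hr
    have hr' := abs_le.1 hr
    have h0 : 0 ≤ r := by linarith
    have := hη2 (r • w) (by simp [norm_smul, hw, abs_of_nonneg h0]; linarith) (R • w)
      (by simp [norm_smul, hw, abs_of_pos hR]; linarith) (by
        rw [dist_eq_norm, ← sub_smul, norm_smul, hw, mul_one, Real.norm_eq_abs]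
        linarith)
    rw [Real.dist_eq] at this
    exact this.le
  have hball : ∀ w : euc N, ‖w‖ = 1 → ∀ r, 0 ≤ r → r ≤ 2 * R →
      r • w ∈ closedBall (0 : euc N) (2 * R) := by
    intro w hw r h0 h1
    simpa [norm_smul, hw, abs_of_nonneg h0] using h1
  have ha : ∀ w : euc N, ‖w‖ = 1 → |v (R • w) / g| ≤ M / g := by
    intro w hw
    rw [abs_div, abs_of_pos hg]
    have := hM _ (hball w hw R hR.le (by linarith))
    rw [Real.norm_eq_abs] at this
    gcongr
  have htC : ∀ᶠ t in 𝓝[>] (0 : ℝ), 0 < t ∧ t * C ≤ η := by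
    have : Ioo 0 (η / C) ∈ 𝓝[>] (0 : ℝ) := Ioo_mem_nhdsGT (by positivity)
    filter_upwards [this] with t ht
    exact ⟨ht.1, ((lt_div_iff₀ Cpos).1 ht.2).le⟩
  have ht1 := htime _ hKc (ε * g / 4) (by positivity)
  obtain ⟨m, mpos, hm⟩ : ∃ m > 0, ∀ x ∈ closedBall (0 : euc N) (R - η), m ≤ u 0 x := by
    obtain ⟨p, hp, hpm⟩ := (isCompact_closedBall (0 : euc N) (R - η)).exists_isMinOn
      ⟨0, by simp; linarith⟩ hu0.continuousOn
    refine ⟨u 0 p, hpos0 p ?_, fun x hx => hpm hx⟩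
    simp at hp ⊢
    linarith
  have ht2 : ∀ᶠ t in 𝓝[>] (0 : ℝ), t * (M + ε * g / 4) < m := by
    have : Ioo 0 (m / (M + ε * g / 4)) ∈ 𝓝[>] (0 : ℝ) := Ioo_mem_nhdsGT (by positivity)
    filter_upwards [this] with t ht
    exact (lt_div_iff₀ (by positivity)).1 ht.2
  constructor
  · filter_upwards [htC, ht1, ht2] with t ⟨tpos, htC⟩ ht1 ht2 w hw r hr0 hr
    have haw := abs_le.1 (ha w hw)
    set a := v (R • w) / g with hadef
    have hga : v (R • w) = g * a := by rw [hadef]; field_simp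
    have hrη : r ≤ R + η := by
      have : t * (a - ε) ≤ t * C := by
        apply mul_le_mul_of_nonneg_left _ tpos.le
        linarith
      linarith
    have hx := hball w hw r hr0 (by linarith)
    have h1 := (abs_le.1 (ht1 _ hx)).1
    rcases le_or_gt r (R - η) with hdeep | hnear
    · have h2 := hm (r • w) (by simpa [norm_smul, hw, abs_of_nonneg hr0] using hdeep)
      have h3 := hM _ hx
      rw [Real.norm_eq_abs] at h3
      have h4 : t * (-M) ≤ t * v (r • w) := by
        apply mul_le_mul_of_nonneg_left (abs_le.1 h3).1 tpos.le
      linarith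
    · have hrR : |r - R| ≤ η := abs_le.2 ⟨by linarith, by linarith⟩
      have h2 := (abs_le.1 (hη1 w hw r (hrR.trans ηa))).1
      have h3 := (abs_le.1 (hvnear w hw r hrR)).1
      have h4 : t * (g * a - ε * g / 4) ≤ t * v (r • w) := by
        apply mul_le_mul_of_nonneg_left _ tpos.le
        linarith
      obtain ⟨p, hp, hp'⟩ : ∃ p > 0, r - R = t * (a - ε) - p :=
        ⟨R + t * (a - ε) - r, by linarith, by ring⟩
      have h5 : |r - R| ≤ t * C + p := by
        rw [hp']
        have : |t * (a - ε)| ≤ t * C := by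
          rw [abs_mul, abs_of_pos tpos]
          apply mul_le_mul_of_nonneg_left _ tpos.le
          exact abs_le.2 ⟨by linarith, by linarith⟩
        have h6 := abs_sub (t * (a - ε)) p
        rw [abs_of_pos hp] at h6
        linarith
      have h6 : e2 * |r - R| ≤ t * (ε * g / 4) + g / 2 * p := by
        calc e2 * |r - R| ≤ e2 * (t * C + p) := by gcongr
          _ = t * (e2 * C) + e2 * p := by ring
          _ ≤ _ := by gcongr
      have h7 : g * (r - R) = t * (g * a) - t * (ε * g) - g * p := by rw [hp']; ring
      have h8 : 0 < t * (ε * g) := by positivity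
      have h9 : 0 < g * p := by positivity
      linarith
  · refine ⟨η, ηpos, ?_⟩
    filter_upwards [htC, ht1] with t ⟨tpos, htC⟩ ht1 w hw r hr hrη
    have haw := abs_le.1 (ha w hw)
    set a := v (R • w) / g with hadef
    have hga : v (R • w) = g * a := by rw [hadef]; field_simp
    have hrη' : R - η ≤ r := by
      have : t * (-C) ≤ t * (a + ε) := by
        apply mul_le_mul_of_nonneg_left _ tpos.le
        linarith
      linarith
    have hr0 : 0 ≤ r := by linarith
    have hx := hball w hw r hr0 (by linarith)
    have h1 := (abs_le.1 (ht1 _ hx)).2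
    have hrR : |r - R| ≤ η := abs_le.2 ⟨by linarith, by linarith⟩
    have h2 := (abs_le.1 (hη1 w hw r (hrR.trans ηa))).2
    have h3 := (abs_le.1 (hvnear w hw r hrR)).2
    have h4 : t * v (r • w) ≤ t * (g * a + ε * g / 4) := by
      apply mul_le_mul_of_nonneg_left _ tpos.le
      linarith
    obtain ⟨p, hp, hp'⟩ : ∃ p ≥ 0, r - R = t * (a + ε) + p :=
      ⟨r - (R + t * (a + ε)), by simp only [ge_iff_le]; linarith, by ring⟩
    have h5 : |r - R| ≤ t * C + p := by
      rw [hp']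
      have : |t * (a + ε)| ≤ t * C := by
        rw [abs_mul, abs_of_pos tpos]
        apply mul_le_mul_of_nonneg_left _ tpos.le
        exact abs_le.2 ⟨by linarith, by linarith⟩
      have h6 := abs_add_le (t * (a + ε)) p
      rw [abs_of_nonneg hp] at h6
      linarith
    have h6 : e2 * |r - R| ≤ t * (ε * g / 4) + g / 2 * p := by
      calc e2 * |r - R| ≤ e2 * (t * C + p) := by gcongr
        _ = t * (e2 * C) + e2 * p := by ring
        _ ≤ _ := by gcongr
    have h7 : g * (r - R) = t * (g * a) + t * (ε * g) + g * p := by rw [hp']; ring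
    have h8 : 0 < t * (ε * g) := by positivity
    have h9 : 0 ≤ g * p := by positivity
    linarith

theorem intS {N : ℕ} {f : sphere (0 : euc N) 1 → ℝ} (hf : Continuous f) :
    Integrable f ((volume : Measure (euc N)).toSphere) :=
  hf.integrable_of_hasCompactSupport (HasCompactSupport.of_compactSpace _)

theorem mean_zero (N : ℕ) (hN : 2 ≤ N) (R : ℝ) (hR : 0 < R) (Ω : ℝ → Set (euc N))
    (u : ℝ → euc N → ℝ) (v : euc N → ℝ) (g : ℝ) (hg : 0 < g)
    (hexp : ∀ ε > 0, ∃ η > 0, η < R ∧ ∀ w : euc N, ‖w‖ = 1 → ∀ r, |r - R| ≤ η →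
      |u 0 (r • w) + g * (r - R)| ≤ ε * |r - R|)
    (hv : Continuous v) (hu0 : Continuous (u 0))
    (htime : ∀ K : Set (euc N), IsCompact K → ∀ ε > 0,
      ∀ᶠ t in 𝓝[>] (0 : ℝ), ∀ x ∈ K, |u t x - u 0 x - t * v x| ≤ ε * t)
    (hpos0 : ∀ x ∈ ball (0 : euc N) R, 0 < u 0 x)
    (hΩ : ∀ᶠ t in 𝓝[>] (0 : ℝ), IsOpen (Ω t) ∧ IsPreconnected (Ω t) ∧ 0 ∈ Ω t ∧
      (∀ x ∈ Ω t, 0 < u t x) ∧ (∀ x ∈ frontier (Ω t), u t x = 0) ∧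
      volume (Ω t) = volume (ball (0 : euc N) R)) :
    ∫ w : sphere (0 : euc N) 1, v (R • (w : euc N)) ∂((volume : Measure (euc N)).toSphere) = 0 := by
  set σ := (volume : Measure (euc N)).toSphere with hσ
  have hN0 : (N : ℝ) ≠ 0 := by
    have : N ≠ 0 := by omega
    exact_mod_cast this
  have hNpos : (0 : ℝ) < N := by positivity
  have hvS : Continuous fun w : sphere (0 : euc N) 1 => v (R • (w : euc N)) / g := by fun_prop
  obtain ⟨w0, hw0⟩ := exists_unit N hN
  have : Nontrivial (euc N) := by
    have : Nonempty (Fin N) := ⟨⟨0, by omega⟩⟩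
    infer_instance
  obtain ⟨M, hM⟩ : ∃ M, ∀ w : euc N, ‖w‖ = 1 → |v (R • w) / g| ≤ M := by
    obtain ⟨M, hM⟩ := (isCompact_sphere (0 : euc N) 1).exists_bound_of_continuousOn
      (f := fun w => v (R • w) / g) (by fun_prop)
    exact ⟨M, fun w hw => hM w (by simpa using hw)⟩
  have hM0 : 0 ≤ M := (abs_nonneg _).trans (hM w0 hw0)
  have hvolR : volume (ball (0 : euc N) R) = ENNReal.ofReal (∫ _w : sphere (0 : euc N) 1,
      R ^ N / N ∂σ) := by
    have h1 := polar_vol N hN (fun _ => R) continuous_const (fun _ _ => hR)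
    rw [← h1, ← measure_sdiff_null (measure_singleton (0 : euc N))]
    congr 1
    ext x
    simp [and_comm]
  have key : ∀ ε > 0, (∫ w : sphere (0 : euc N) 1, (v (R • (w : euc N)) / g - ε) ∂σ ≤ 0) ∧
      (0 ≤ ∫ w : sphere (0 : euc N) 1, (v (R • (w : euc N)) / g + 2 * ε) ∂σ) := by
    intro ε hε
    obtain ⟨hin, η, ηpos, hout⟩ := signs N R hR u v g hg hexp hv hu0 htime hpos0 ε hε
    set C := M + ε with hC
    have Cpos : 0 < C := by positivity
    obtain ⟨ζ, ζpos, hζ⟩ : ∃ ζ > 0, ∀ s : ℝ, |s| < ζ →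
        |(R + s) ^ (N - 1) - R ^ (N - 1)| < ε * R ^ (N - 1) / C := by
      have hc : Continuous fun s : ℝ => (R + s) ^ (N - 1) := by fun_prop
      have := Metric.continuous_iff.1 hc 0 (ε * R ^ (N - 1) / C) (by positivity)
      simpa [Real.dist_eq] using this
    have htsmall : ∀ᶠ t in 𝓝[>] (0 : ℝ), 0 < t ∧ t * C < η ∧ t * C < ζ ∧ t * C < R := by
      have : Ioo 0 (min η (min ζ R) / C) ∈ 𝓝[>] (0 : ℝ) := Ioo_mem_nhdsGT (by positivity)
      filter_upwards [this] with t ht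
      have h1 := (lt_div_iff₀ Cpos).1 ht.2
      exact ⟨ht.1, h1.trans_le (min_le_left _ _),
        h1.trans_le ((min_le_right _ _).trans (min_le_left _ _)),
        h1.trans_le ((min_le_right _ _).trans (min_le_right _ _))⟩
    obtain ⟨t, hin, hout, ⟨tpos, htη, htζ, htR⟩, hop, hpc, h0m, hpos, hfr, hvol⟩ :=
      (hin.and (hout.and (htsmall.and hΩ))).exists
    have hbm : ∀ w : euc N, ‖w‖ = 1 → |t * (v (R • w) / g - ε)| ≤ t * C := by
      intro w hw
      rw [abs_mul, abs_of_pos tpos]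
      apply mul_le_mul_of_nonneg_left _ tpos.le
      have := abs_le.1 (hM w hw)
      exact abs_le.2 ⟨by linarith, by linarith⟩
    have hbp : ∀ w : euc N, ‖w‖ = 1 → |t * (v (R • w) / g + ε)| ≤ t * C := by
      intro w hw
      rw [abs_mul, abs_of_pos tpos]
      apply mul_le_mul_of_nonneg_left _ tpos.le
      have := abs_le.1 (hM w hw)
      exact abs_le.2 ⟨by linarith, by linarith⟩
    have hunit : ∀ x : euc N, x ≠ 0 → ‖‖x‖⁻¹ • x‖ = 1 := by
      intro x hx
      rw [norm_smul, norm_inv, norm_norm]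
      exact inv_mul_cancel₀ (norm_ne_zero_iff.2 hx)
    have hrep : ∀ x : euc N, x ≠ 0 → ‖x‖ • (‖x‖⁻¹ • x) = x := by
      intro x hx
      rw [smul_smul, mul_inv_cancel₀ (norm_ne_zero_iff.2 hx), one_smul]
    -- inner inclusion
    have hsub1 : {x : euc N | x ≠ 0 ∧ ‖x‖ < R + t * (v (R • (‖x‖⁻¹ • x)) / g - ε)} ⊆ Ω t := by
      rintro x ⟨hx0, hx⟩
      have hseg : segment ℝ 0 x ⊆ Ω t := by
        apply (convex_segment (0 : euc N) x).isPreconnected.subset_of_closure_inter_subset hop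
        · exact ⟨0, left_mem_segment ℝ 0 x, h0m⟩
        · rintro y ⟨hy, hys⟩
          by_contra hyΩ
          have hyf : y ∈ frontier (Ω t) := by
            rw [hop.frontier_eq]; exact ⟨hy, hyΩ⟩
          have hy0 := hfr y hyf
          rw [segment_eq_image] at hys
          obtain ⟨θ, hθ, rfl⟩ := hys
          have h1 := hin (‖x‖⁻¹ • x) (hunit x hx0) (θ * ‖x‖)
            (mul_nonneg hθ.1 (norm_nonneg _)) (by
              have : θ * ‖x‖ ≤ 1 * ‖x‖ := by gcongr; exact hθ.2
              linarith)
          rw [mul_smul, hrep x hx0] at h1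
          simp only [smul_zero, zero_add] at hy0
          linarith
      exact hseg (right_mem_segment ℝ 0 x)
    -- outer inclusion
    have hlt : ∀ x ∈ Ω t, ‖x‖ < R + η := by
      intro x hx
      by_contra hge
      push Not at hge
      have himg : IsPreconnected ((fun y : euc N => ‖y‖) '' Ω t) :=
        hpc.image _ continuous_norm.continuousOn
      have hmem : R + η ∈ (fun y : euc N => ‖y‖) '' Ω t := by
        apply himg.Icc_subset (a := 0) (b := ‖x‖) ⟨0, h0m, by simp⟩ ⟨x, hx, rfl⟩
        exact ⟨by positivity, hge⟩
      obtain ⟨y, hy, hyn⟩ := hmem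
      simp only at hyn
      have hy0 : y ≠ 0 := by
        rintro rfl
        simp at hyn; linarith
      have h1 := hout (‖y‖⁻¹ • y) (hunit y hy0) ‖y‖ (by
        have := (abs_le.1 (hbp _ (hunit y hy0))).2; linarith) hyn.le
      rw [hrep y hy0] at h1
      linarith [hpos y hy]
    have hsub2 : Ω t \ {0} ⊆
        {x : euc N | x ≠ 0 ∧ ‖x‖ < R + t * (v (R • (‖x‖⁻¹ • x)) / g + ε)} := by
      rintro x ⟨hx, hx0⟩
      have hx0' : x ≠ 0 := by simpa using hx0
      refine ⟨hx0', ?_⟩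
      by_contra hge
      push Not at hge
      have h1 := hout (‖x‖⁻¹ • x) (hunit x hx0') ‖x‖ hge (hlt x hx).le
      rw [hrep x hx0'] at h1
      linarith [hpos x hx]
    have hm1 := polar_vol N hN (fun w => R + t * (v (R • w) / g - ε)) (by fun_prop)
      (fun w hw => by linarith [(abs_le.1 (hbm w hw)).1])
    have hm2 := polar_vol N hN (fun w => R + t * (v (R • w) / g + ε)) (by fun_prop)
      (fun w hw => by linarith [(abs_le.1 (hbp w hw)).1])
    have hle1 := measure_mono (μ := volume) hsub1
    have hle2 := measure_mono (μ := volume) hsub2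
    rw [measure_sdiff_null (measure_singleton (0 : euc N))] at hle2
    rw [hvol, hvolR] at hle1 hle2
    rw [hm1] at hle1
    rw [hm2] at hle2
    have hnn : 0 ≤ ∫ _w : sphere (0 : euc N) 1, R ^ N / N ∂σ :=
      integral_nonneg fun _ => by positivity
    rw [ENNReal.ofReal_le_ofReal_iff hnn] at hle1
    rw [ENNReal.ofReal_le_ofReal_iff (integral_nonneg fun w => by
      have := (abs_le.1 (hbp w (by simp))).1
      have h2 : 0 < R + t * (v (R • (w : euc N)) / g + ε) := by linarith
      simp only [Pi.zero_apply]
      positivity)] at hle2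
    have hNs : N - 1 + 1 = N := by omega
    have hRN : R ^ N = R ^ (N - 1) * R := by rw [← pow_succ, hNs]
    set P := R ^ (N - 1) with hP
    have Ppos : 0 < P := by positivity
    have bern : ∀ X : ℝ, 0 < X → ∀ Y : ℝ, 0 ≤ Y → X ^ N + N * X ^ (N - 1) * (Y - X) ≤ Y ^ N := by
      intro X hX Y hY
      have h1 := one_add_mul_le_pow (a := (Y - X) / X) (by
        rw [le_div_iff₀ hX]; linarith) N
      have h2 : 1 + (Y - X) / X = Y / X := by field_simp; ring
      rw [h2, div_pow, le_div_iff₀ (by positivity)] at h1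
      have h3 : X ^ N = X ^ (N - 1) * X := by rw [← pow_succ, hNs]
      calc X ^ N + N * X ^ (N - 1) * (Y - X) = (1 + N * ((Y - X) / X)) * X ^ N := by
            rw [h3]; field_simp
        _ ≤ _ := h1
    constructor
    · have h1 : ∫ w : sphere (0 : euc N) 1, (R ^ N / N + P * t * (v (R • (w : euc N)) / g - ε)) ∂σ
          ≤ ∫ _w : sphere (0 : euc N) 1, R ^ N / N ∂σ := by
        refine le_trans (integral_mono (intS (by fun_prop)) (intS (by fun_prop)) ?_) hle1
        intro w
        have h2 := (abs_le.1 (hbm w (by simp))).1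
        have h3 := bern R hR (R + t * (v (R • (w : euc N)) / g - ε)) (by linarith)
        simp only
        rw [le_div_iff₀ hNpos]
        refine le_trans (le_of_eq ?_) h3
        field_simp
        ring
      rw [integral_add (intS continuous_const) (intS (by fun_prop)),
        integral_const_mul] at h1
      have h2 : 0 < P * t := by positivity
      by_contra hcon
      push Not at hcon
      have := mul_pos h2 hcon
      linarith
    · have h1 : ∫ _w : sphere (0 : euc N) 1, R ^ N / N ∂σ ≤
          ∫ w : sphere (0 : euc N) 1, (R ^ N / N + P * t * (v (R • (w : euc N)) / g + 2 * ε)) ∂σ := by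
        refine le_trans hle2 (integral_mono (intS (by fun_prop)) (intS (by fun_prop)) ?_)
        intro w
        have h2 := abs_le.1 (hbp w (by simp))
        set b := v (R • (w : euc N)) / g + ε with hb
        have hX : 0 < R + t * b := by linarith
        have h3 := bern (R + t * b) hX R hR.le
        have h4 := hζ (t * b) (lt_of_le_of_lt (hbp w (by simp)) htζ)
        have hbC : |b| ≤ C := by
          have := abs_le.1 (hM w (by simp))
          exact abs_le.2 ⟨by linarith, by linarith⟩
        have h5 : ((R + t * b) ^ (N - 1) - P) * b ≤ ε * P := by
          calc _ ≤ |((R + t * b) ^ (N - 1) - P) * b| := le_abs_self _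
            _ = |(R + t * b) ^ (N - 1) - P| * |b| := abs_mul _ _
            _ ≤ (ε * P / C) * C := by gcongr
            _ = ε * P := by field_simp
        simp only
        rw [show v (R • (w : euc N)) / g + 2 * ε = b + ε by rw [hb]; ring]
        rw [div_le_iff₀ hNpos]
        have h6 : (R ^ N / N + P * t * (b + ε)) * N = R ^ N + N * t * (P * b + ε * P) := by
          field_simp
        rw [h6]
        have h7 : N * t * ((R + t * b) ^ (N - 1) * b) ≤ N * t * (P * b + ε * P) := by
          apply mul_le_mul_of_nonneg_left _ (by positivity)
          linarith
        have h8 : N * (R + t * b) ^ (N - 1) * (R - (R + t * b)) =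
            -(N * t * ((R + t * b) ^ (N - 1) * b)) := by ring
        linarith
      rw [integral_add (intS continuous_const) (intS (by fun_prop)),
        integral_const_mul] at h1
      have h2 : 0 < P * t := by positivity
      by_contra hcon
      push Not at hcon
      have := mul_neg_of_pos_of_neg h2 hcon
      linarith
  have hzero : ∫ w : sphere (0 : euc N) 1, v (R • (w : euc N)) / g ∂σ = 0 := by
    set s := σ.real univ with hs
    have hs0 : 0 ≤ s := measureReal_nonneg
    have key2 : ∀ ε > 0, |∫ w : sphere (0 : euc N) 1, v (R • (w : euc N)) / g ∂σ| ≤ ε := by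
      intro ε hε
      obtain ⟨k1, k2⟩ := key (ε / (2 * (s + 1))) (by positivity)
      rw [integral_sub (intS hvS) (intS continuous_const), integral_const, smul_eq_mul] at k1
      rw [integral_add (intS hvS) (intS continuous_const), integral_const, smul_eq_mul] at k2
      have h1 : s * (ε / (2 * (s + 1))) ≤ ε / 2 := by
        rw [← mul_div_assoc, div_le_div_iff₀ (by positivity) (by positivity)]
        nlinarith
      rw [abs_le]
      constructor <;> linarith
    exact abs_eq_zero.1 (le_antisymm (le_of_forall_pos_le_add fun ε hε => by
      simpa using key2 ε hε) (abs_nonneg _))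
  rw [integral_div] at hzero
  rcases div_eq_zero_iff.1 hzero with h | h
  · exact h
  · exact absurd h hg.ne'

theorem lap_continuous {N : ℕ} {f : euc N → ℝ} (hf : ContDiff ℝ 2 f) : Continuous (lap N f) := by
  have h : lap N f = fun x => ∑ i : Fin N,
      fderiv ℝ (fun y => fderiv ℝ f y (EuclideanSpace.single i 1)) x
      (EuclideanSpace.single i 1) := funext fun x => lap_eq N f hf x
  rw [h]
  refine continuous_finsetSum _ fun i _ => ?_
  exact ((contDiff_partial hf _).continuous_fderiv (by norm_num)).clm_apply continuous_const

theorem lap_hasCompactSupport {N : ℕ} {f : euc N → ℝ} (hc : HasCompactSupport f) :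
    HasCompactSupport (lap N f) := by
  refine hc.mono' fun x hx => ?_
  by_contra hx'
  apply hx
  have h1 : f =ᶠ[𝓝 x] fun _ => 0 := notMem_tsupport_iff_eventuallyEq.1 hx'
  rw [lap_congr h1]
  simp [lap]

theorem ibp_one {N : ℕ} {f g : euc N → ℝ} (hf : ContDiff ℝ 1 f) (hg : ContDiff ℝ 1 g)
    (hc : HasCompactSupport f ∨ HasCompactSupport g) (e : euc N) :
    ∫ x, f x * fderiv ℝ g x e = - ∫ x, fderiv ℝ f x e * g x := by
  have cf' : Continuous fun x => fderiv ℝ f x e :=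
    (hf.continuous_fderiv (by norm_num)).clm_apply continuous_const
  have cg' : Continuous fun x => fderiv ℝ g x e :=
    (hg.continuous_fderiv (by norm_num)).clm_apply continuous_const
  apply integral_mul_fderiv_eq_neg_fderiv_mul_of_integrable
  · apply (cf'.mul hg.continuous).integrable_of_hasCompactSupport
    rcases hc with hc | hc
    · exact (hc.fderiv_apply ℝ e).mul_right
    · exact hc.mul_left
  · apply (hf.continuous.mul cg').integrable_of_hasCompactSupport
    rcases hc with hc | hc
    · exact hc.mul_right
    · exact (hc.fderiv_apply ℝ e).mul_left
  · apply (hf.continuous.mul hg.continuous).integrable_of_hasCompactSupport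
    rcases hc with hc | hc
    · exact hc.mul_right
    · exact hc.mul_left
  · exact fun x _ => hf.differentiable (by norm_num) x
  · exact fun x _ => hg.differentiable (by norm_num) x

theorem lap_ibp (N : ℕ) (f p : euc N → ℝ) (hf : ContDiff ℝ 2 f) (hp : ContDiff ℝ 2 p)
    (hc : HasCompactSupport p) : ∫ x, f x * lap N p x = ∫ x, lap N f x * p x := by
  have hf1 : ContDiff ℝ 1 f := hf.of_le (by norm_num)
  have hp1 : ContDiff ℝ 1 p := hp.of_le (by norm_num)
  simp_rw [lap_eq N f hf, lap_eq N p hp, Finset.mul_sum, Finset.sum_mul]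
  rw [integral_finsetSum, integral_finsetSum]
  · refine Finset.sum_congr rfl fun i _ => ?_
    set e : euc N := EuclideanSpace.single i 1
    rw [ibp_one hf1 (contDiff_partial hp e) (Or.inr (hc.fderiv_apply ℝ e)),
      ibp_one (contDiff_partial hf e) hp1 (Or.inr hc)]
    simp
  · intro i _
    set e : euc N := EuclideanSpace.single i 1
    refine Continuous.integrable_of_hasCompactSupport
      ((((contDiff_partial hf e).continuous_fderiv (by norm_num)).clm_apply
      continuous_const).mul hp.continuous) hc.mul_left
  · intro i _
    set e : euc N := EuclideanSpace.single i 1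
    refine Continuous.integrable_of_hasCompactSupport (hf.continuous.mul
      (((contDiff_partial hp e).continuous_fderiv (by norm_num)).clm_apply
      continuous_const)) (HasCompactSupport.mul_left ?_)
    exact (hc.fderiv_apply ℝ e).fderiv_apply ℝ e

theorem chi_bounds : ∃ M : ℝ, 0 ≤ M ∧ ∀ s ∈ Icc (0 : ℝ) 1,
    |deriv Real.smoothTransition s| ≤ M ∧ |deriv (deriv Real.smoothTransition) s| ≤ M := by
  have h2 : ContDiff ℝ 2 Real.smoothTransition := Real.smoothTransition.contDiff
  have h1 : ContDiff ℝ 1 (deriv Real.smoothTransition) := by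
    have := (contDiff_succ_iff_deriv (n := 1) (f := Real.smoothTransition)).1
      (by rw [one_add_one_eq_two]; exact h2)
    exact this.2.2
  obtain ⟨M1, hM1⟩ := isCompact_Icc.exists_bound_of_continuousOn (s := Icc (0:ℝ) 1)
    h1.continuous.continuousOn
  obtain ⟨M2, hM2⟩ := isCompact_Icc.exists_bound_of_continuousOn (s := Icc (0:ℝ) 1)
    (h1.continuous_deriv (by norm_num)).continuousOn
  refine ⟨max 0 (max M1 M2), le_max_left _ _, fun s hs => ⟨?_, ?_⟩⟩
  · exact (hM1 s hs).trans ((le_max_left _ _).trans (le_max_right _ _))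
  · exact (hM2 s hs).trans ((le_max_right _ _).trans (le_max_right _ _))

/-- derivative facts for the rescaled transition function -/
theorem chi_scaled (a ε s : ℝ) :
    deriv (fun s => Real.smoothTransition ((a - s) / ε - 1)) s =
      -(1 / ε) * deriv Real.smoothTransition ((a - s) / ε - 1) ∧
    deriv (deriv (fun s => Real.smoothTransition ((a - s) / ε - 1))) s =
      (1 / ε) ^ 2 * deriv (deriv Real.smoothTransition) ((a - s) / ε - 1) := by
  have h2 : ContDiff ℝ 2 Real.smoothTransition := Real.smoothTransition.contDiff
  have h1 : ContDiff ℝ 1 (deriv Real.smoothTransition) := by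
    have := (contDiff_succ_iff_deriv (n := 1) (f := Real.smoothTransition)).1
      (by rw [one_add_one_eq_two]; exact h2)
    exact this.2.2
  have hl : ∀ s : ℝ, HasDerivAt (fun s : ℝ => (a - s) / ε - 1) (-(1 / ε)) s := by
    intro s
    have := (((hasDerivAt_id s).const_sub a).div_const ε).sub_const 1
    exact this.congr_deriv (by ring)
  have hd : ∀ s, HasDerivAt (fun s => Real.smoothTransition ((a - s) / ε - 1))
      (-(1 / ε) * deriv Real.smoothTransition ((a - s) / ε - 1)) s := by
    intro s
    have := ((h2.differentiable (by norm_num)) ((a - s) / ε - 1)).hasDerivAt.comp s (hl s)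
    rw [mul_comm]
    exact this
  refine ⟨(hd s).deriv, ?_⟩
  have he : deriv (fun s => Real.smoothTransition ((a - s) / ε - 1)) =
    fun s => -(1 / ε) * deriv Real.smoothTransition ((a - s) / ε - 1) := funext fun s => (hd s).deriv
  rw [he]
  have := (((h1.differentiable (by norm_num)) ((a - s) / ε - 1)).hasDerivAt.comp s
    (hl s)).const_mul (-(1 / ε))
  have h3 := this.deriv
  simp only [Function.comp_def] at h3
  rw [h3]
  ring

theorem cutoff (N : ℕ) (R : ℝ) (hR : 0 < R) (u : euc N → ℝ)
    (hu : ContDiff ℝ 2 u) (lam : ℝ) (hlam : 0 ≤ lam)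
    (hu0 : ∀ x : euc N, ‖x‖ = R → u x = 0)
    (hupos : ∀ x ∈ ball (0 : euc N) R, 0 < u x)
    (hul : ∀ x ∈ ball (0 : euc N) R, -lap N u x = lam * u x) :
    ∃ C ≥ 0, ∀ ε, 0 < ε → ε ≤ 1 → ∃ p : euc N → ℝ, ContDiff ℝ 2 p ∧
      (∀ x, p x ≠ 0 → ε ≤ R ^ 2 - ‖x‖ ^ 2) ∧
      (∀ x y, ‖x‖ = ‖y‖ → lap N p x + lam * p x = lap N p y + lam * p y) ∧
      (∀ x, lap N p x + lam * p x ≠ 0 → ε ≤ R ^ 2 - ‖x‖ ^ 2 ∧ R ^ 2 - ‖x‖ ^ 2 ≤ 2 * ε) ∧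
      (∀ x, |lap N p x + lam * p x| ≤ C / ε) ∧
      (∀ x, 0 ≤ p x * u x) ∧ (∀ x, 2 * ε ≤ R ^ 2 - ‖x‖ ^ 2 → p x = u x) := by
  obtain ⟨C0, hC0, hC⟩ := bdry_lip N R hR u hu hu0
  obtain ⟨M, hM0, hM⟩ := chi_bounds
  obtain ⟨D, hD⟩ := (isCompact_closedBall (0 : euc N) R).exists_bound_of_continuousOn
    (f := fderiv ℝ u) (hu.continuous_fderiv (by norm_num)).continuousOn
  have hD0 : 0 ≤ D := (norm_nonneg _).trans (hD 0 (by simp [hR.le]))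
  refine ⟨2 * C0 * (4 * R ^ 2 * M + 2 * N * M) + N * (2 * (M * (2 * R) * D)), by positivity, ?_⟩
  intro ε hε hε1
  set F : ℝ → ℝ := fun s => Real.smoothTransition ((R ^ 2 - s) / ε - 1) with hF
  have hFc : ContDiff ℝ 2 F := by
    have : ContDiff ℝ 2 Real.smoothTransition := Real.smoothTransition.contDiff
    exact this.comp (by fun_prop)
  set η : euc N → ℝ := fun y => F (‖y - 0‖ ^ 2) with hη
  have hηc : ContDiff ℝ 2 η := contDiff_sq hFc 0
  have hηx : ∀ x, η x = Real.smoothTransition ((R ^ 2 - ‖x‖ ^ 2) / ε - 1) := by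
    intro x; simp [hη, hF]
  have hη0 : ∀ x, R ^ 2 - ‖x‖ ^ 2 ≤ ε → η x = 0 := by
    intro x hx
    rw [hηx]
    apply Real.smoothTransition.zero_of_nonpos
    rw [sub_nonpos, div_le_one hε]; exact hx
  have hη1 : ∀ x, 2 * ε ≤ R ^ 2 - ‖x‖ ^ 2 → η x = 1 := by
    intro x hx
    rw [hηx]
    apply Real.smoothTransition.one_of_one_le
    rw [le_sub_iff_add_le, le_div_iff₀ hε]; linarith
  have hball : ∀ x : euc N, ε ≤ R ^ 2 - ‖x‖ ^ 2 → ‖x‖ < R := by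
    intro x hx
    by_contra hge
    push Not at hge
    nlinarith
  have hpc : ContDiff ℝ 2 (fun y => η y * u y) := hηc.mul hu
  have hq0 : ∀ x, R ^ 2 - ‖x‖ ^ 2 < ε → lap N (fun y => η y * u y) x + lam * (η x * u x) = 0 := by
    intro x hx
    have hev : (fun y => η y * u y) =ᶠ[𝓝 x] fun _ => 0 := by
      have : ∀ᶠ y in 𝓝 x, R ^ 2 - ‖y‖ ^ 2 < ε :=
        (ContinuousAt.eventually_lt (by fun_prop) continuousAt_const hx)
      filter_upwards [this] with y hy
      rw [hη0 y hy.le, zero_mul]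
    rw [lap_congr hev, hη0 x hx.le]
    simp [lap]
  have hq1 : ∀ x, 2 * ε < R ^ 2 - ‖x‖ ^ 2 →
      lap N (fun y => η y * u y) x + lam * (η x * u x) = 0 := by
    intro x hx
    have hev : (fun y => η y * u y) =ᶠ[𝓝 x] u := by
      have : ∀ᶠ y in 𝓝 x, 2 * ε < R ^ 2 - ‖y‖ ^ 2 :=
        (ContinuousAt.eventually_lt continuousAt_const (by fun_prop) hx)
      filter_upwards [this] with y hy
      rw [hη1 y hy.le, one_mul]
    rw [lap_congr hev, hη1 x hx.le]
    have := hul x (by simpa using hball x (by linarith))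
    linarith
  have hprad : ∀ x y, ‖x‖ = ‖y‖ → η x * u x = η y * u y := by
    intro x y hxy
    have h1 : η x = η y := by rw [hηx, hηx, hxy]
    rcases le_or_gt ‖x‖ R with hx | hx
    · rw [h1, eigen_radial N R hR u hu lam hlam hu0 hupos hul x y hxy hx]
    · have h2 : η x = 0 := hη0 x (by nlinarith)
      rw [← h1, h2, zero_mul, zero_mul]
  refine ⟨fun y => η y * u y, hpc, ?_, ?_, ?_, ?_, ?_, ?_⟩
  · intro x hx
    by_contra h
    push Not at h
    exact hx (by simp [hη0 x h.le])
  · intro x y hxy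
    obtain ⟨A, hA⟩ := exists_isometry N x y hxy
    have h1 := lap_isometry N _ hpc A x
    have h2 : (fun y => η (A y) * u (A y)) = fun y => η y * u y :=
      funext fun z => hprad _ _ (by simp)
    rw [h2, hA] at h1
    simp only
    rw [h1, hprad x y hxy]
  · intro x hx
    constructor
    · by_contra h
      push Not at h
      exact hx (hq0 x h)
    · by_contra h
      push Not at h
      exact hx (hq1 x h)
  · intro x
    simp only
    rcases lt_or_ge (R ^ 2 - ‖x‖ ^ 2) ε with h1 | h1
    · rw [hq0 x h1, abs_zero]; positivity
    rcases lt_or_ge (2 * ε) (R ^ 2 - ‖x‖ ^ 2) with h2 | h2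
    · rw [hq1 x h2, abs_zero]; positivity
    have hxR := hball x h1
    have hxb : x ∈ ball (0 : euc N) R := by simpa using hxR
    have hs : (R ^ 2 - ‖x‖ ^ 2) / ε - 1 ∈ Icc (0 : ℝ) 1 := by
      constructor
      · rw [sub_nonneg, one_le_div hε]; exact h1
      · rw [sub_le_iff_le_add, div_le_iff₀ hε]; linarith
    obtain ⟨b1, b2⟩ := hM _ hs
    obtain ⟨e1, e2⟩ := chi_scaled (R ^ 2) ε (‖x‖ ^ 2)
    rw [lap_mul N η u hηc hu]
    have hle : lap N η x = 4 * ‖x‖ ^ 2 * deriv (deriv F) (‖x‖ ^ 2) + 2 * N * deriv F (‖x‖ ^ 2) := by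
      have := lap_sq N F hFc 0 x
      rw [sub_zero] at this
      exact this
    have hF1 : |deriv F (‖x‖ ^ 2)| ≤ M / ε := by
      rw [hF, e1, abs_mul, abs_neg, abs_of_pos (by positivity : 0 < 1 / ε)]
      calc 1 / ε * _ ≤ 1 / ε * M := by gcongr
        _ = M / ε := by ring
    have hF2 : |deriv (deriv F) (‖x‖ ^ 2)| ≤ M / ε ^ 2 := by
      rw [hF, e2, abs_mul, abs_of_pos (by positivity : 0 < (1 / ε) ^ 2)]
      calc (1 / ε) ^ 2 * _ ≤ (1 / ε) ^ 2 * M := by gcongr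
        _ = M / ε ^ 2 := by ring
    have hlη : |lap N η x| ≤ (4 * R ^ 2 * M + 2 * N * M) / ε ^ 2 := by
      rw [hle]
      have hx2 : ‖x‖ ^ 2 ≤ R ^ 2 := by linarith
      have hM2 : M / ε ≤ M / ε ^ 2 := by
        apply div_le_div_of_nonneg_left hM0 (by positivity)
        nlinarith
      calc _ ≤ |4 * ‖x‖ ^ 2 * deriv (deriv F) (‖x‖ ^ 2)| + |2 * N * deriv F (‖x‖ ^ 2)| :=
            abs_add_le _ _
        _ = 4 * ‖x‖ ^ 2 * |deriv (deriv F) (‖x‖ ^ 2)| + 2 * N * |deriv F (‖x‖ ^ 2)| := by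
            rw [abs_mul (4 * ‖x‖ ^ 2), abs_mul (2 * (N : ℝ)),
              abs_of_nonneg (by positivity : 0 ≤ 4 * ‖x‖ ^ 2),
              abs_of_nonneg (by positivity : 0 ≤ 2 * (N : ℝ))]
        _ ≤ 4 * R ^ 2 * (M / ε ^ 2) + 2 * N * (M / ε ^ 2) := by
            gcongr
            exact hF1.trans hM2
        _ = _ := by ring
    have hux : |u x| ≤ C0 * (2 * ε) :=
      (hC x hxb).trans (by gcongr)
    have hsum : |∑ i : Fin N, 2 * (fderiv ℝ η x (EuclideanSpace.single i 1) *
        fderiv ℝ u x (EuclideanSpace.single i 1))| ≤ N * (2 * (M / ε * (2 * R) * D)) := by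
      refine (Finset.abs_sum_le_sum_abs _ _).trans ?_
      have : ∀ i ∈ (Finset.univ : Finset (Fin N)), |2 * (fderiv ℝ η x (EuclideanSpace.single i 1) *
        fderiv ℝ u x (EuclideanSpace.single i 1))| ≤ 2 * (M / ε * (2 * R) * D) := by
        intro i _
        rw [abs_mul, abs_mul, abs_of_pos (by norm_num : (0:ℝ) < 2)]
        have h3 : |fderiv ℝ u x (EuclideanSpace.single i 1)| ≤ D := by
          have := (fderiv ℝ u x).le_opNorm (EuclideanSpace.single i 1)
          have h4 := hD x (by simpa using hxR.le)
          simp only [EuclideanSpace.norm_single, norm_one, mul_one, Real.norm_eq_abs] at this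
          exact this.trans h4
        have h4 : |fderiv ℝ η x (EuclideanSpace.single i 1)| ≤ M / ε * (2 * R) := by
          have h5 := fderiv_sq N F (hFc.differentiable (by norm_num)) 0 x i
          rw [hη, h5, abs_mul]
          simp only [sub_zero, PiLp.zero_apply]
          rw [abs_mul, abs_of_pos (by norm_num : (0:ℝ) < 2)]
          have h6 : |x i| ≤ R := by
            have := PiLp.norm_apply_le x i
            rw [Real.norm_eq_abs] at this
            linarith
          gcongr
        gcongr
      refine (Finset.sum_le_sum this).trans ?_
      simp
    have hul' := hul x hxb
    have heq : η x * lap N u x + u x * lap N η x + (∑ i : Fin N,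
        2 * (fderiv ℝ η x (EuclideanSpace.single i 1) *
        fderiv ℝ u x (EuclideanSpace.single i 1))) + lam * (η x * u x) =
        u x * lap N η x + ∑ i : Fin N, 2 * (fderiv ℝ η x (EuclideanSpace.single i 1) *
        fderiv ℝ u x (EuclideanSpace.single i 1)) := by
      have : lap N u x = - (lam * u x) := by linarith
      rw [this]; ring
    rw [heq]
    refine (abs_add_le _ _).trans ?_
    rw [abs_mul]
    calc _ ≤ C0 * (2 * ε) * ((4 * R ^ 2 * M + 2 * N * M) / ε ^ 2) +
          N * (2 * (M / ε * (2 * R) * D)) := by gcongr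
      _ = _ := by field_simp
  · intro x
    have h1 : 0 ≤ η x := by rw [hηx]; exact Real.smoothTransition.nonneg _
    have : 0 ≤ η x * (u x * u x) := mul_nonneg h1 (mul_self_nonneg _)
    simp only
    linarith
  · intro x hx
    simp [hη1 x hx]

theorem shell_vol (N : ℕ) (hN : 2 ≤ N) (R : ℝ) (hR : 0 < R) :
    ∃ K ≥ 0, ∀ ε, 0 < ε → ε ≤ R ^ 2 / 4 →
      volume.real (closedBall (0 : euc N) R \ ball 0 (R - 2 * ε / R)) ≤ K * ε := by
  have hd : Module.finrank ℝ (euc N) = N := by simp [euc]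
  have : Nontrivial (euc N) := by
    have : Nonempty (Fin N) := ⟨⟨0, by omega⟩⟩
    infer_instance
  set ω := volume.real (ball (0 : euc N) 1) with hω
  have hω0 : 0 ≤ ω := measureReal_nonneg
  refine ⟨R ^ N * (N * (2 / R ^ 2)) * ω, by positivity, ?_⟩
  intro ε hε hε1
  have hε2 : 2 * ε / R ≤ R / 2 := by
    rw [div_le_iff₀ hR]; nlinarith
  have hpos : 0 ≤ 2 * ε / R := by positivity
  rw [measureReal_sdiff (by
    intro x hx
    rw [mem_ball_zero_iff] at hx
    rw [mem_closedBall_zero_iff]; linarith) measurableSet_ball measure_closedBall_lt_top.ne]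
  have hball : volume.real (ball (0 : euc N) (R - 2 * ε / R)) = (R - 2 * ε / R) ^ N * ω := by
    rw [measureReal_def, Measure.addHaar_ball _ _ (by linarith), hd, ENNReal.toReal_mul,
      ENNReal.toReal_ofReal (by apply pow_nonneg; linarith), ← measureReal_def]
  rw [Measure.addHaar_real_closedBall _ _ hR.le, hball, hd, ← hω]
  have hb := one_add_mul_le_pow (a := -(2 * ε / R ^ 2)) (by
    have : 2 * ε / R ^ 2 ≤ 1 := by rw [div_le_one (by positivity)]; nlinarith [sq_nonneg R]
    linarith) N
  have he : (R - 2 * ε / R) ^ N = R ^ N * (1 + -(2 * ε / R ^ 2)) ^ N := by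
    rw [← mul_pow]; congr 1; field_simp; ring
  rw [he]
  have hRN : 0 < R ^ N := by positivity
  have := mul_le_mul_of_nonneg_left hb (mul_nonneg hRN.le hω0)
  have e2 : R ^ N * (N * (2 / R ^ 2)) * ω * ε = R ^ N * ω * (N * (2 * ε / R ^ 2)) := by ring
  rw [e2]
  nlinarith

theorem vanish (N : ℕ) (hN : 2 ≤ N) (R : ℝ) (hR : 0 < R) (v : euc N → ℝ) (hv : Continuous v)
    (hmean : ∫ w : sphere (0 : euc N) 1, v (R • (w : euc N))
      ∂((volume : Measure (euc N)).toSphere) = 0)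
    (C : ℝ) (hC : 0 ≤ C) (κ : ℝ) (hκ : 0 < κ) :
    ∃ ε0 > 0, ∀ ε, 0 < ε → ε ≤ ε0 → ∀ q : euc N → ℝ, Continuous q →
      (∀ x y, ‖x‖ = ‖y‖ → q x = q y) →
      (∀ x, q x ≠ 0 → ε ≤ R ^ 2 - ‖x‖ ^ 2 ∧ R ^ 2 - ‖x‖ ^ 2 ≤ 2 * ε) →
      (∀ x, |q x| ≤ C / ε) → |∫ x, v x * q x| ≤ κ := by
  obtain ⟨K, hK0, hK⟩ := shell_vol N hN R hR
  obtain ⟨w0, hw0⟩ := exists_unit N hN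
  have huc := (isCompact_closedBall (0 : euc N) R).uniformContinuousOn_of_continuous
    (f := v) hv.continuousOn
  obtain ⟨M, hM⟩ := (isCompact_closedBall (0 : euc N) R).exists_bound_of_continuousOn
    (f := v) hv.continuousOn
  obtain ⟨d, dpos, hd⟩ := Metric.uniformContinuousOn_iff.1 huc (κ / (C * K + 1)) (by positivity)
  refine ⟨min (R ^ 2 / 4) (R * d / 4), by positivity, ?_⟩
  intro ε hε hε0 q hq hrad hsupp hbd
  have hε1 : ε ≤ R ^ 2 / 4 := hε0.trans (min_le_left _ _)
  have hε2 : ε ≤ R * d / 4 := hε0.trans (min_le_right _ _)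
  have hsh : ∀ x, q x ≠ 0 → ‖x‖ ≤ R ∧ R - 2 * ε / R ≤ ‖x‖ := by
    intro x hx
    obtain ⟨h1, h2⟩ := hsupp x hx
    have h3 : ‖x‖ ≤ R := by
      by_contra h
      push Not at h
      nlinarith
    refine ⟨h3, ?_⟩
    rw [sub_le_iff_le_add, ← sub_le_iff_le_add', le_div_iff₀ hR]
    nlinarith [norm_nonneg x]
  have hhalf : 2 * ε / R ≤ R / 2 := by
    rw [div_le_iff₀ hR]; nlinarith
  have hdd : 2 * ε / R < d := by
    rw [div_lt_iff₀ hR]; nlinarith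
  have hqc : HasCompactSupport q := by
    apply HasCompactSupport.intro (isCompact_closedBall (0 : euc N) R)
    intro x hx
    by_contra h
    exact hx (by simpa using (hsh x h).1)
  have hqi : Integrable q := hq.integrable_of_hasCompactSupport hqc
  have hvq : Integrable fun x => v x * q x :=
    (hv.mul hq).integrable_of_hasCompactSupport hqc.mul_left
  have hnorm : ∀ x : euc N, ‖R • (‖x‖⁻¹ • x)‖ ≤ R := by
    intro x
    rw [norm_smul, norm_smul, norm_inv, norm_norm, Real.norm_of_nonneg hR.le]
    have : ‖x‖⁻¹ * ‖x‖ ≤ 1 := inv_mul_le_one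
    nlinarith
  have hgi : Integrable fun x : euc N => v (R • (‖x‖⁻¹ • x)) * q x := by
    apply hqi.bdd_mul (c := M)
    · apply Measurable.aestronglyMeasurable
      apply hv.measurable.comp
      fun_prop
    · exact Eventually.of_forall fun x => hM _ (by simpa using hnorm x)
  have hzero : ∫ x : euc N, v (R • (‖x‖⁻¹ • x)) * q x = 0 := by
    have h1 := polar_mul N (fun w => v (R • w)) (fun r => q (r • w0)) hN
    rw [hmean, zero_mul] at h1
    rw [← h1]
    refine integral_congr_ae (Eventually.of_forall fun x => ?_)
    simp only
    rw [hrad x (‖x‖ • w0) (by rw [norm_smul, hw0, norm_norm, mul_one])]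
  have hdiff : ∫ x, v x * q x = ∫ x, (v x - v (R • (‖x‖⁻¹ • x))) * q x := by
    have : ∀ x, (v x - v (R • (‖x‖⁻¹ • x))) * q x =
      v x * q x - v (R • (‖x‖⁻¹ • x)) * q x := fun x => by ring
    simp_rw [this]
    rw [integral_sub hvq hgi, hzero, sub_zero]
  rw [hdiff]
  set S := closedBall (0 : euc N) R \ ball 0 (R - 2 * ε / R) with hS
  have hSf : volume S < ⊤ := by
    refine lt_of_le_of_lt (measure_mono sdiff_subset) ?_
    exact measure_closedBall_lt_top
  have hout : ∀ x, x ∉ S → (v x - v (R • (‖x‖⁻¹ • x))) * q x = 0 := by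
    intro x hx
    by_contra h
    have hq0 : q x ≠ 0 := fun h' => h (by rw [h', mul_zero])
    obtain ⟨h1, h2⟩ := hsh x hq0
    apply hx
    refine ⟨by simpa using h1, ?_⟩
    simpa using h2
  rw [← setIntegral_eq_integral_of_forall_compl_eq_zero hout]
  have hpt : ∀ x ∈ S, ‖(v x - v (R • (‖x‖⁻¹ • x))) * q x‖ ≤ κ / (C * K + 1) * (C / ε) := by
    rintro x ⟨hx1, hx2⟩
    have hx1' : ‖x‖ ≤ R := by simpa using hx1
    have hx2' : R - 2 * ε / R ≤ ‖x‖ := by simpa using hx2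
    have hxp : 0 < ‖x‖ := by linarith
    rw [norm_mul]
    have h1 : dist x (R • (‖x‖⁻¹ • x)) < d := by
      rw [dist_eq_norm]
      have : x - R • (‖x‖⁻¹ • x) = (1 - R * ‖x‖⁻¹) • x := by
        rw [sub_smul, one_smul, smul_smul]
      rw [this, norm_smul, Real.norm_eq_abs]
      have h3 : |1 - R * ‖x‖⁻¹| * ‖x‖ = R - ‖x‖ := by
        have h4 : 1 ≤ R * ‖x‖⁻¹ := by
          rw [← div_eq_mul_inv, one_le_div hxp]; exact hx1'
        rw [abs_of_nonpos (by linarith)]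
        field_simp
        ring
      rw [h3]; linarith
    have h2 := hd x hx1 (R • (‖x‖⁻¹ • x)) (by simpa using hnorm x) h1
    rw [dist_eq_norm] at h2
    gcongr
    exact hbd x
  refine (norm_setIntegral_le_of_norm_le_const hSf hpt).trans ?_
  calc κ / (C * K + 1) * (C / ε) * volume.real S
      ≤ κ / (C * K + 1) * (C / ε) * (K * ε) := by gcongr; exact hK ε hε hε1
    _ = κ * ((C * K) / (C * K + 1)) := by field_simp
    _ ≤ κ * 1 := by
        gcongr
        rw [div_le_one (by positivity)]; linarith
    _ = κ := mul_one κ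

theorem deriv_int (N : ℕ) (u : ℝ → euc N → ℝ) (v : euc N → ℝ) (hv : Continuous v)
    (hu0 : Continuous (u 0)) (huc : ∀ᶠ t in 𝓝[>] (0 : ℝ), Continuous (u t))
    (htime : ∀ K : Set (euc N), IsCompact K → ∀ ε > 0,
      ∀ᶠ t in 𝓝[>] (0 : ℝ), ∀ x ∈ K, |u t x - u 0 x - t * v x| ≤ ε * t)
    (f : euc N → ℝ) (hf : Continuous f) (hc : HasCompactSupport f) :
    Tendsto (fun t => t⁻¹ * ((∫ x, u t x * f x) - ∫ x, u 0 x * f x)) (𝓝[>] 0)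
      (𝓝 (∫ x, v x * f x)) := by
  have hIntg : ∀ g : euc N → ℝ, Continuous g → Integrable fun x => g x * f x := fun g hg =>
    (hg.mul hf).integrable_of_hasCompactSupport hc.mul_left
  have hfi : Integrable fun x => |f x| := (hf.integrable_of_hasCompactSupport hc).abs
  set I := ∫ x, |f x| with hI
  have hI0 : 0 ≤ I := integral_nonneg fun x => abs_nonneg _
  rw [Metric.tendsto_nhds]
  intro ε hε
  filter_upwards [huc, htime (tsupport f) hc (ε / (2 * (I + 1))) (by positivity),
    self_mem_nhdsWithin] with t h1 h2 h3
  have h3' : 0 < t := h3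
  rw [Real.dist_eq]
  have heq : t⁻¹ * ((∫ x, u t x * f x) - ∫ x, u 0 x * f x) - ∫ x, v x * f x =
      ∫ x, (t⁻¹ * (u t x - u 0 x - t * v x)) * f x := by
    have e1 : ∀ x, (t⁻¹ * (u t x - u 0 x - t * v x)) * f x =
        t⁻¹ * (u t x * f x - u 0 x * f x) - v x * f x := by
      intro x
      field_simp
    simp_rw [e1]
    have i1 : Integrable fun x => t⁻¹ * (u t x * f x - u 0 x * f x) :=
      ((hIntg _ h1).sub (hIntg _ hu0)).const_mul _
    rw [integral_sub i1 (hIntg _ hv), integral_const_mul, integral_sub (hIntg _ h1) (hIntg _ hu0)]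
  rw [heq]
  have hb : ‖∫ x, (t⁻¹ * (u t x - u 0 x - t * v x)) * f x‖ ≤
      ∫ x, (ε / (2 * (I + 1))) * |f x| := by
    apply norm_integral_le_of_norm_le (hfi.const_mul _)
    refine Eventually.of_forall fun x => ?_
    rw [norm_mul, Real.norm_eq_abs, Real.norm_eq_abs]
    by_cases hx : x ∈ tsupport f
    · gcongr
      rw [abs_mul, abs_inv, abs_of_pos h3', inv_mul_le_iff₀ h3']
      exact (h2 x hx).trans_eq (mul_comm _ _)
    · rw [image_eq_zero_of_notMem_tsupport hx]; simp
  rw [integral_const_mul, ← hI, Real.norm_eq_abs] at hb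
  refine lt_of_le_of_lt hb ?_
  rw [div_mul_eq_mul_div, div_lt_iff₀ (by positivity)]
  nlinarith

theorem weak (N : ℕ) (R : ℝ) (Ω : ℝ → Set (euc N)) (u : ℝ → euc N → ℝ)
    (v : euc N → ℝ) (hv : Continuous v) (l : ℝ → ℝ) (L : ℝ)
    (hl : HasDerivWithinAt l L (Ici 0) 0)
    (htime : ∀ K : Set (euc N), IsCompact K → ∀ ε > 0,
      ∀ᶠ t in 𝓝[>] (0 : ℝ), ∀ x ∈ K, |u t x - u 0 x - t * v x| ≤ ε * t)
    (hu0 : ContDiff ℝ 2 (u 0)) (hpos0 : ∀ x ∈ ball (0 : euc N) R, 0 < u 0 x)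
    (hul0 : ∀ x ∈ ball (0 : euc N) R, -lap N (u 0) x = l 0 * u 0 x)
    (hΩ : ∀ᶠ t in 𝓝[>] (0 : ℝ), IsOpen (Ω t) ∧ 0 ∈ Ω t ∧
      (∀ x ∈ frontier (Ω t), u t x = 0) ∧ ContDiff ℝ 2 (u t) ∧
      ∀ x ∈ Ω t, -lap N (u t) x = l t * u t x)
    (p : euc N → ℝ) (hp : ContDiff ℝ 2 p) (r : ℝ) (hr : 0 ≤ r) (hrR : r < R)
    (hps : ∀ x, p x ≠ 0 → ‖x‖ ≤ r) :
    ∫ x, v x * (lap N p x + l 0 * p x) = - (L * ∫ x, u 0 x * p x) := by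
  have hpc : HasCompactSupport p := by
    apply HasCompactSupport.intro (isCompact_closedBall (0 : euc N) r)
    intro x hx
    by_contra h
    exact hx (by simpa using hps x h)
  have hsubR : closedBall (0 : euc N) r ⊆ ball 0 R := closedBall_subset_ball hrR
  have hsub : ∀ᶠ t in 𝓝[>] (0 : ℝ), closedBall (0 : euc N) r ⊆ Ω t := by
    have hK := isCompact_closedBall (0 : euc N) r
    obtain ⟨x0, hx0, hmin⟩ := hK.exists_isMinOn ⟨0, by simp [hr]⟩ hu0.continuous.continuousOn
    have hm := hpos0 x0 (hsubR hx0)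
    set m := u 0 x0 with hmdef
    obtain ⟨M, hM⟩ := hK.exists_bound_of_continuousOn (f := v) hv.continuousOn
    have hM0 : 0 ≤ M := (norm_nonneg _).trans (hM x0 hx0)
    have hsmall : ∀ᶠ t in 𝓝[>] (0 : ℝ), t < m / (M + 1) :=
      (eventually_lt_nhds (by positivity : (0:ℝ) < m / (M + 1))).filter_mono nhdsWithin_le_nhds
    filter_upwards [hΩ, htime _ hK 1 one_pos, hsmall, self_mem_nhdsWithin] with t h1 h2 h3 h4
    have h4' : 0 < t := h4
    obtain ⟨hop, h0, hfr, -, -⟩ := h1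
    have hpc' : IsPreconnected (closedBall (0 : euc N) r) :=
      (convex_closedBall (0 : euc N) r).isPreconnected
    apply hpc'.subset_of_closure_inter_subset hop ⟨0, by simp [hr], h0⟩
    rintro x ⟨hx, hxr⟩
    by_contra hxΩ
    have hxf : x ∈ frontier (Ω t) := by rw [hop.frontier_eq]; exact ⟨hx, hxΩ⟩
    have hz := hfr x hxf
    have ha := (abs_le.1 (h2 x hxr)).1
    have hb := (abs_le.1 (hM x hxr)).1
    have hc := hmin hxr
    simp only [mem_ofPred_eq] at hc
    rw [lt_div_iff₀ (by positivity)] at h3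
    nlinarith
  have hlc : HasCompactSupport (lap N p) := lap_hasCompactSupport hpc
  have hid : ∀ (f : euc N → ℝ) (a : ℝ), ContDiff ℝ 2 f →
      (∀ x ∈ closedBall (0 : euc N) r, -lap N f x = a * f x) →
      (∫ x, f x * lap N p x) + a * ∫ x, f x * p x = 0 := by
    intro f a hf hfa
    rw [lap_ibp N f p hf hp hpc, ← integral_const_mul, ← integral_add]
    · rw [← integral_zero (euc N) ℝ (μ := volume)]
      refine integral_congr_ae (Eventually.of_forall fun x => ?_)
      simp only
      by_cases hx : p x = 0
      · simp [hx]
      · have := hfa x (by simpa using hps x hx)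
        have h2 : lap N f x = -(a * f x) := by linarith
        rw [h2]; ring
    · exact ((lap_continuous hf).mul hp.continuous).integrable_of_hasCompactSupport hpc.mul_left
    · exact ((hf.continuous.mul hp.continuous).integrable_of_hasCompactSupport
        hpc.mul_left).const_mul _
  have huc : ∀ᶠ t in 𝓝[>] (0 : ℝ), Continuous (u t) :=
    hΩ.mono fun t h => h.2.2.2.1.continuous
  have dA := deriv_int N u v hv hu0.continuous huc htime (lap N p) (lap_continuous hp) hlc
  have dB := deriv_int N u v hv hu0.continuous huc htime p hp.continuous hpc
  have hid0 := hid (u 0) (l 0) hu0 fun x hx => hul0 x (hsubR hx)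
  have dl : Tendsto (fun t => t⁻¹ * (l t - l 0)) (𝓝[>] 0) (𝓝 L) := by
    have := hasDerivWithinAt_iff_tendsto_slope.1 hl
    rw [Ici_sdiff_left] at this
    refine this.congr fun t => ?_
    rw [slope_def_field, sub_zero, div_eq_inv_mul]
  have tl : Tendsto l (𝓝[>] 0) (𝓝 (l 0)) :=
    (hl.continuousWithinAt.mono Ioi_subset_Ici_self).tendsto
  -- rewrite the sum of difference quotients
  have hsum : ∀ᶠ t in 𝓝[>] (0 : ℝ),
      t⁻¹ * ((∫ x, u t x * lap N p x) - ∫ x, u 0 x * lap N p x) +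
      l t * (t⁻¹ * ((∫ x, u t x * p x) - ∫ x, u 0 x * p x)) +
      t⁻¹ * (l t - l 0) * (∫ x, u 0 x * p x) = 0 := by
    filter_upwards [hsub, hΩ] with t h1 h2
    have h3 := hid (u t) (l t) h2.2.2.2.1 fun x hx => h2.2.2.2.2 x (h1 hx)
    linear_combination t⁻¹ * h3 - t⁻¹ * hid0
  have hlim := (dA.add (tl.mul dB)).add (dl.mul_const (∫ x, u 0 x * p x))
  have h0 := tendsto_nhds_unique (hlim.congr' hsum) tendsto_const_nhds
  have hsplit : ∫ x, v x * (lap N p x + l 0 * p x) =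
      (∫ x, v x * lap N p x) + l 0 * ∫ x, v x * p x := by
    rw [← integral_const_mul, ← integral_add]
    · refine integral_congr_ae (Eventually.of_forall fun x => ?_)
      simp only
      ring
    · exact (hv.mul (lap_continuous hp)).integrable_of_hasCompactSupport hlc.mul_left
    · exact ((hv.mul hp.continuous).integrable_of_hasCompactSupport hpc.mul_left).const_mul _
  rw [hsplit]
  linarith

theorem core (N : ℕ) (hN : 2 ≤ N) (R : ℝ) (hR : 0 < R) (Ω : ℝ → Set (euc N))
    (u : ℝ → euc N → ℝ) (δ : ℝ) (hδ : 0 < δ)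
    (hu : ContDiffOn ℝ (⊤ : ℕ∞) (fun p : ℝ × euc N => u p.1 p.2) (Ico (0 : ℝ) δ ×ˢ univ))
    (l : ℝ → ℝ) (L : ℝ) (hl : HasDerivWithinAt l L (Ici 0) 0) (hl0 : 0 ≤ l 0)
    (hu0 : ∀ x : euc N, ‖x‖ = R → u 0 x = 0)
    (hpos0 : ∀ x ∈ ball (0 : euc N) R, 0 < u 0 x)
    (hul0 : ∀ x ∈ ball (0 : euc N) R, -lap N (u 0) x = l 0 * u 0 x)
    (hΩ : ∀ᶠ t in 𝓝[>] (0 : ℝ), IsOpen (Ω t) ∧ IsPreconnected (Ω t) ∧ 0 ∈ Ω t ∧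
      (∀ x ∈ Ω t, 0 < u t x) ∧ (∀ x ∈ frontier (Ω t), u t x = 0) ∧
      volume (Ω t) = volume (ball (0 : euc N) R) ∧
      ∀ x ∈ Ω t, -lap N (u t) x = l t * u t x) : L = 0 := by
  have hsm : ∀ t ∈ Ico (0 : ℝ) δ, ContDiff ℝ 2 (u t) := by
    intro t ht
    have h1 : ContDiffOn ℝ (⊤ : ℕ∞) (fun x : euc N => u t x) univ :=
      hu.comp (f := fun x : euc N => (t, x)) (by fun_prop) (fun x _ => ⟨ht, mem_univ _⟩)
    exact (contDiffOn_univ.1 h1).of_le (WithTop.coe_le_coe.2 (le_top : (2 : ℕ∞) ≤ ⊤))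
  have hu0c := hsm 0 ⟨le_rfl, hδ⟩
  obtain ⟨v, hv, htime⟩ := time_exp N δ hδ u hu
  obtain ⟨g, hg, hgrad⟩ := bdry_grad N hN R hR (u 0) hu0c (l 0) hl0 hu0 hpos0 hul0
  have hmean := mean_zero N hN R hR Ω u v g hg
    (fun ε hε => bdry_exp N R hR (u 0) hu0c hu0 g hgrad ε hε) hv hu0c.continuous htime hpos0
    (hΩ.mono fun t h => ⟨h.1, h.2.1, h.2.2.1, h.2.2.2.1, h.2.2.2.2.1, h.2.2.2.2.2.1⟩)
  obtain ⟨C, hC, hcut⟩ := cutoff N R hR (u 0) hu0c (l 0) hl0 hu0 hpos0 hul0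
  have hIco : ∀ᶠ t in 𝓝[>] (0 : ℝ), t ∈ Ico (0 : ℝ) δ := by
    filter_upwards [Ioo_mem_nhdsGT hδ] with t ht using ⟨ht.1.le, ht.2⟩
  -- positive lower bound
  set m := ∫ x in ball (0 : euc N) (R / 2), u 0 x * u 0 x with hm
  have hmpos : 0 < m := by
    rw [hm, setIntegral_pos_iff_support_of_nonneg_ae]
    · have hsub : ball (0 : euc N) (R / 2) ⊆
          (Function.support fun x => u 0 x * u 0 x) ∩ ball (0 : euc N) (R / 2) := by
        intro x hx
        refine ⟨?_, hx⟩
        have := hpos0 x (ball_subset_ball (by linarith) hx)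
        exact (mul_pos this this).ne'
      exact lt_of_lt_of_le (measure_ball_pos _ _ (by positivity)) (measure_mono hsub)
    · exact Eventually.of_forall fun x => mul_self_nonneg _
    · exact ((hu0c.continuous.mul hu0c.continuous).continuousOn.integrableOn_compact
        (isCompact_closedBall (0 : euc N) (R / 2))).mono_set ball_subset_closedBall
  have key : ∀ κ > 0, |L| * m ≤ κ := by
    intro κ hκ
    obtain ⟨ε0, hε0, hvan⟩ := vanish N hN R hR v hv hmean C hC κ hκ
    set ε := min ε0 (min 1 (R ^ 2 / 4)) with hε
    have hεpos : 0 < ε := by positivity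
    have hεR : ε ≤ R ^ 2 / 4 := (min_le_right _ _).trans (min_le_right _ _)
    obtain ⟨p, hp, hps, hrad, hsupp, hbd, hnn, hpu⟩ := hcut ε hεpos
      ((min_le_right _ _).trans (min_le_left _ _))
    have hb := hvan ε hεpos (min_le_left _ _) (fun x => lap N p x + l 0 * p x)
      ((lap_continuous hp).add (continuous_const.mul hp.continuous)) hrad hsupp hbd
    have hrlt : Real.sqrt (R ^ 2 - ε) < R := by
      rw [Real.sqrt_lt' hR]; linarith
    have hpsr : ∀ x, p x ≠ 0 → ‖x‖ ≤ Real.sqrt (R ^ 2 - ε) := fun x hx =>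
      Real.le_sqrt_of_sq_le (by linarith [hps x hx])
    have hw := weak N R Ω u v hv l L hl htime hu0c hpos0 hul0
      ((hΩ.and hIco).mono fun t h => ⟨h.1.1, h.1.2.2.1, h.1.2.2.2.2.1, hsm t h.2,
        h.1.2.2.2.2.2.2⟩) p hp (Real.sqrt (R ^ 2 - ε)) (Real.sqrt_nonneg _) hrlt hpsr
    rw [hw, abs_neg, abs_mul] at hb
    have hpc : HasCompactSupport p := by
      apply HasCompactSupport.intro (isCompact_closedBall (0 : euc N) R)
      intro x hx
      by_contra h
      exact hx (by simpa using (hpsr x h).trans hrlt.le)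
    have hIntg : Integrable fun x => u 0 x * p x :=
      (hu0c.continuous.mul hp.continuous).integrable_of_hasCompactSupport hpc.mul_left
    have hlow : m ≤ ∫ x, u 0 x * p x := by
      have h1 : m = ∫ x in ball (0 : euc N) (R / 2), u 0 x * p x := by
        rw [hm]
        refine setIntegral_congr_fun measurableSet_ball fun x hx => ?_
        have hx' : ‖x‖ < R / 2 := by simpa using hx
        rw [hpu x (by nlinarith [norm_nonneg x])]
      rw [h1]
      refine setIntegral_le_integral hIntg (Eventually.of_forall fun x => ?_)
      simp only [Pi.zero_apply]
      rw [mul_comm]; exact hnn x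
    calc |L| * m ≤ |L| * |∫ x, u 0 x * p x| := by
          gcongr
          exact hlow.trans (le_abs_self _)
      _ ≤ κ := hb
  by_contra hL
  have hLm : 0 < |L| * m := mul_pos (abs_pos.2 hL) hmpos
  have := key (|L| * m / 2) (by positivity)
  linarith

/-- **The ball is a critical point of the first Dirichlet eigenvalue.**
Along a volume-preserving family smoothly converging to a ball, with initial velocity field
orthogonal to the boundary of the ball and jointly smooth first eigenfunctions, `λ'(0) = 0`. -/
theorem ball_is_critical_point_of_first_eigenvalue (N : ℕ) (hN : 2 ≤ N)
    (Ωf : ℝ → Set (euc N)) (c : euc N) (R : ℝ) (hR : 0 < R)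
    (h : SmoothlyConverges N Ωf (ball c R))
    (hopen : ∀ t ∈ Ico (0 : ℝ) h.δ, IsOpen (Ωf t))
    (hbdd : ∀ t ∈ Ico (0 : ℝ) h.δ, Bornology.IsBounded (Ωf t))
    -- the family is volume preserving
    (hvol : ∀ t ∈ Ico (0 : ℝ) h.δ, volume (Ωf t) = volume (ball c R))
    -- the initial velocity field is orthogonal to the boundary of the ball
    (horth : ∀ x ∈ frontier (ball c R), ∃ s : ℝ,
      derivWithin (fun τ => h.Φ τ (h.Φinv 0 x)) (Ici 0) 0 = s • (x - c))
    -- the positive normalized first eigenfunctions exist and are jointly smooth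
    (u : ℝ → euc N → ℝ)
    (husmooth : ContDiffOn ℝ (⊤ : ℕ∞) (fun p : ℝ × euc N => u p.1 p.2) (Ico (0 : ℝ) h.δ ×ˢ univ))
    (hueq : ∀ t ∈ Ico (0 : ℝ) h.δ, ∀ x ∈ Ωf t,
      -lap N (u t) x = firstEigenvalue N (Ωf t) * u t x)
    (hupos : ∀ t ∈ Ico (0 : ℝ) h.δ, ∀ x ∈ Ωf t, 0 < u t x)
    (hu0 : ∀ t ∈ Ico (0 : ℝ) h.δ, ∀ x ∈ frontier (Ωf t), u t x = 0)
    (hunorm : ∀ t ∈ Ico (0 : ℝ) h.δ, ∫ x in Ωf t, u t x ^ 2 = 1) :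
    derivWithin (fun t => firstEigenvalue N (Ωf t)) (Ici 0) 0 = 0 := by
  by_cases hd : DifferentiableWithinAt ℝ (fun t => firstEigenvalue N (Ωf t)) (Ici 0) 0
  swap
  · exact derivWithin_zero_of_not_differentiableWithinAt hd
  have hδ := h.δ_pos
  have h00 : (0 : ℝ) ∈ Ico (0 : ℝ) h.δ := ⟨le_rfl, hδ⟩
  have hinit := h.init
  have hIco : ∀ᶠ t in 𝓝[>] (0 : ℝ), t ∈ Ico (0 : ℝ) h.δ := by
    filter_upwards [Ioo_mem_nhdsGT hδ] with t ht using ⟨ht.1.le, ht.2⟩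
  have hcb : c ∈ ball c R := mem_ball_self hR
  -- the centre stays inside
  have hcmem : ∀ᶠ t in 𝓝[>] (0 : ℝ), c ∈ Ωf t := by
    have h1 : h.Φinv 0 c ∈ ball c R := by
      have h2 := h.image 0 h00
      rw [hinit] at h2
      rw [h2] at hcb
      obtain ⟨y, hy, hyc⟩ := hcb
      have h3 := h.left_inv 0 h00 y
      rw [hyc] at h3
      rw [h3]
      exact hy
    have h2 : ContinuousWithinAt (fun t => h.Φinv t c) (Ico (0 : ℝ) h.δ) 0 :=
      (h.smooth_t_inv c).continuousOn 0 h00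
    have h3 : Tendsto (fun t => h.Φinv t c) (𝓝[>] 0) (𝓝 (h.Φinv 0 c)) := by
      refine h2.tendsto.mono_left ?_
      refine le_inf nhdsWithin_le_nhds ?_
      rw [le_principal_iff]
      exact hIco
    filter_upwards [h3 (isOpen_ball.mem_nhds h1), hIco] with t ht1 ht2
    rw [h.image t ht2]
    exact ⟨h.Φinv t c, ht1, h.right_inv t ht2 c⟩
  have hl0 : 0 ≤ firstEigenvalue N (Ωf 0) := by
    apply Real.sInf_nonneg
    rintro r ⟨f, -, -, -, -, rfl⟩
    exact div_nonneg (integral_nonneg fun x => by positivity)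
      (integral_nonneg fun x => by positivity)
  set e : euc N ≃ₜ euc N := Homeomorph.addLeft c with he
  have hex : ∀ x, e x = c + x := fun x => rfl
  refine core N hN R hR (fun t => e ⁻¹' (Ωf t)) (fun t x => u t (c + x)) h.δ hδ ?_
    (fun t => firstEigenvalue N (Ωf t)) _ hd.hasDerivWithinAt hl0 ?_ ?_ ?_ ?_
  · exact husmooth.comp (f := fun p : ℝ × euc N => (p.1, c + p.2)) (by fun_prop)
      (fun p hp => ⟨hp.1, mem_univ _⟩)
  · intro x hx
    apply hu0 0 h00
    rw [hinit, frontier_ball c hR.ne']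
    simp [hx]
  · intro x hx
    apply hupos 0 h00
    rw [hinit]
    simpa using hx
  · intro x hx
    rw [lap_translate]
    apply hueq 0 h00
    rw [hinit]
    simpa using hx
  · filter_upwards [hIco, hcmem] with t ht hct
    refine ⟨(hopen t ht).preimage e.continuous, ?_, ?_, ?_, ?_, ?_, ?_⟩
    · rw [e.isPreconnected_preimage, h.image t ht]
      exact ((convex_ball c R).isPreconnected).image _ (h.smooth_x t ht).continuous.continuousOn
    · simpa [hex] using hct
    · exact fun x hx => hupos t ht _ hx
    · intro x hx
      rw [← e.preimage_frontier] at hx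
      exact hu0 t ht _ hx
    · have h1 : volume (e ⁻¹' (Ωf t)) = volume (Ωf t) := measure_preimage_add volume c (Ωf t)
      rw [h1, hvol t ht, Measure.addHaar_ball_center]
    · intro x hx
      rw [lap_translate]
      exact hueq t ht _ hx
end

section
/- Let N ≥ 2, z_N = j_{N/2−1}, and ℓ_k = k + N/2 − 1. Then the sequence ρ_k = J_{ℓ_k+1}(z_N) / J_{ℓ_k}(z_N), k ≥ 1, is positive, strictly decreasing, converges to 0 as k → ∞, and is convex for k ≥ 2 (i.e. ρ_{k+1} − 2ρ_k + ρ_{k−1} ≥ 0 for all k ≥ 3). -/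
open MeasureTheory Metric Set Filter Topology
open scoped RealInnerProductSpace

namespace BesselAux

/-- terms of the normalized Bessel series -/
noncomputable def T (ν : ℝ) (m : ℕ) (y : ℝ) : ℝ :=
  (-1 : ℝ) ^ m / (m.factorial * Real.Gamma (m + ν + 1)) * y ^ m

/-- normalized Bessel function: `J_ν(x) = (x/2)^ν F_ν(x²/4)` -/
noncomputable def F (ν : ℝ) (y : ℝ) : ℝ := ∑' m : ℕ, T ν m y

lemma gamma_pos {ν : ℝ} (hν : 0 ≤ ν) (m : ℕ) : 0 < Real.Gamma (m + ν + 1) :=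
  Real.Gamma_pos_of_pos (by positivity)

lemma gamma_ge {ν : ℝ} (hν : 0 ≤ ν) (m : ℕ) :
    Real.Gamma (ν + 1) ≤ Real.Gamma (m + ν + 1) := by
  induction m with
  | zero => simp
  | succ m ih =>
    have h1 : Real.Gamma ((m + 1 : ℕ) + ν + 1) = (m + ν + 1) * Real.Gamma (m + ν + 1) := by
      rw [← Real.Gamma_add_one (by positivity)]
      congr 1; push_cast; ring
    rw [h1]
    have h2 := gamma_pos hν m
    have h3 : (0 : ℝ) ≤ m := by positivity
    nlinarith

lemma T_bound {ν : ℝ} (hν : 0 ≤ ν) (m : ℕ) {y R : ℝ} (hy : |y| ≤ R) :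
    ‖T ν m y‖ ≤ (Real.Gamma (ν + 1))⁻¹ * (R ^ m / m.factorial) := by
  have h0 : 0 < Real.Gamma (ν + 1) := Real.Gamma_pos_of_pos (by positivity)
  have h1 := gamma_ge hν m
  have h2 := gamma_pos hν m
  unfold T
  rw [norm_mul, norm_div, norm_pow, norm_neg, norm_one, one_pow, norm_pow, Real.norm_eq_abs,
    Real.norm_eq_abs, abs_of_pos (a := (m.factorial : ℝ) * _) (by positivity)]
  have h3 : |y| ^ m ≤ R ^ m := pow_le_pow_left₀ (abs_nonneg _) hy _
  have h4 : (0 : ℝ) ≤ R ^ m := le_trans (by positivity) h3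
  calc 1 / (m.factorial * Real.Gamma (m + ν + 1)) * |y| ^ m
      ≤ 1 / (m.factorial * Real.Gamma (ν + 1)) * R ^ m := by gcongr
    _ = _ := by field_simp

lemma T_summable {ν : ℝ} (hν : 0 ≤ ν) (y : ℝ) : Summable fun m => T ν m y :=
  Summable.of_norm_bounded ((Real.summable_pow_div_factorial |y|).mul_left _)
    (fun m => T_bound hν m le_rfl)

lemma T_succ_deriv {ν : ℝ} (hν : 0 ≤ ν) (m : ℕ) (y : ℝ) :
    HasDerivAt (T ν (m + 1)) (- T (ν + 1) m y) y := by
  have h := (hasDerivAt_pow (m + 1) y).const_mul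
    ((-1 : ℝ) ^ (m + 1) / ((m + 1).factorial * Real.Gamma ((m + 1 : ℕ) + ν + 1)))
  refine h.congr_deriv ?_
  unfold T
  have h2 := gamma_pos hν (m + 1)
  have e : (m : ℝ) + (ν + 1) + 1 = (m + 1 : ℕ) + ν + 1 := by push_cast; ring
  rw [e, Nat.factorial_succ]
  push_cast at h2 ⊢
  have h3 : (0 : ℝ) < m.factorial := by positivity
  field_simp
  rw [pow_succ]; ring

lemma F_deriv {ν : ℝ} (hν : 0 ≤ ν) (y : ℝ) : HasDerivAt (F ν) (- F (ν + 1) y) y := by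
  have hs := T_summable hν y
  have key : HasDerivAt (fun y => ∑' m, T ν (m + 1) y) (∑' m, - T (ν + 1) m y) y := by
    refine hasDerivAt_tsum_of_isPreconnected
      (g := fun m y => T ν (m + 1) y) (g' := fun m y => - T (ν + 1) m y)
      (u := fun m => (Real.Gamma (ν + 1 + 1))⁻¹ * ((|y| + 1) ^ m / m.factorial))
      ((Real.summable_pow_div_factorial (|y| + 1)).mul_left _)
      (t := Metric.ball 0 (|y| + 1)) Metric.isOpen_ball
      (convex_ball 0 _).isPreconnected (fun m z _ => T_succ_deriv hν m z) ?_
      (y₀ := y) ?_ ?_ ?_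
    · intro m z hz
      rw [norm_neg]
      apply T_bound (by positivity)
      simpa using (mem_ball_zero_iff.1 hz).le
    · simp
    · exact (summable_nat_add_iff 1).2 hs
    · simp
  rw [tsum_neg] at key
  have e : F ν = fun y => T ν 0 0 + ∑' m, T ν (m + 1) y := by
    funext z
    unfold F
    rw [(T_summable hν z).tsum_eq_zero_add]
    simp [T]
  rw [e]
  exact key.const_add _

lemma F_zero {ν : ℝ} (hν : 0 ≤ ν) : F ν 0 = 1 / Real.Gamma (ν + 1) := by
  unfold F
  rw [(T_summable hν 0).tsum_eq_zero_add]
  simp [T]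

lemma F_zero_pos {ν : ℝ} (hν : 0 ≤ ν) : 0 < F ν 0 := by
  rw [F_zero hν]
  have h0 : 0 < Real.Gamma (ν + 1) := Real.Gamma_pos_of_pos (by positivity)
  positivity

lemma F_zero_rec {ν : ℝ} (hν : 0 ≤ ν) : F ν 0 = (ν + 1) * F (ν + 1) 0 := by
  rw [F_zero hν, F_zero (by positivity), Real.Gamma_add_one (s := ν + 1) (by positivity)]
  have h0 : 0 < Real.Gamma (ν + 1) := Real.Gamma_pos_of_pos (by positivity)
  field_simp

lemma F_cont {ν : ℝ} (hν : 0 ≤ ν) : Continuous (F ν) :=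
  continuous_iff_continuousAt.2 fun y => (F_deriv hν y).continuousAt

lemma T_rec {ν : ℝ} (hν : 0 ≤ ν) (m : ℕ) (y : ℝ) :
    T ν (m + 1) y = (ν + 1) * T (ν + 1) (m + 1) y - y * T (ν + 2) m y := by
  unfold T
  have h2 := gamma_pos hν (m + 1)
  have e2 : ((m + 1 : ℕ) : ℝ) + (ν + 1) + 1 = ((m + 1 : ℕ) + ν + 1) + 1 := by ring
  have e1 : (m : ℝ) + (ν + 2) + 1 = ((m + 1 : ℕ) + ν + 1) + 1 := by push_cast; ring
  rw [e1, e2, Real.Gamma_add_one (s := ((m + 1 : ℕ) : ℝ) + ν + 1) (by positivity), Nat.factorial_succ]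
  push_cast at h2 ⊢
  have h3 : (0 : ℝ) < m.factorial := by positivity
  have h4 : (0 : ℝ) < (m : ℝ) + 1 + ν + 1 := by positivity
  field_simp
  ring

lemma F_rec {ν : ℝ} (hν : 0 ≤ ν) (y : ℝ) :
    F ν y = (ν + 1) * F (ν + 1) y - y * F (ν + 2) y := by
  have hν1 : 0 ≤ ν + 1 := by positivity
  have hν2 : 0 ≤ ν + 2 := by positivity
  have s1 := (summable_nat_add_iff 1).2 (T_summable hν1 y)
  have s2 := T_summable hν2 y
  have h0 : T ν 0 y = (ν + 1) * T (ν + 1) 0 y := by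
    have := F_zero_rec hν
    rw [F_zero hν, F_zero hν1] at this
    simpa [T] using this
  unfold F
  rw [(T_summable hν y).tsum_eq_zero_add, (T_summable hν1 y).tsum_eq_zero_add, h0]
  simp_rw [T_rec hν]
  rw [(s1.mul_left _).tsum_sub (s2.mul_left _), tsum_mul_left, tsum_mul_left]
  ring

lemma J_eq (ν : ℝ) {x : ℝ} (hx : 0 < x) :
    besselJ ν x = (x / 2) ^ ν * F ν ((x / 2) ^ 2) := by
  unfold besselJ F T
  rw [← tsum_mul_left]
  congr 1; funext m
  rw [Real.rpow_add (by positivity), Real.rpow_mul (by positivity)]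
  norm_cast
  ring

lemma F_pos_step {ν : ℝ} (hν : 0 ≤ ν) {b : ℝ} (h : ∀ y, 0 < y → y < b → 0 < F ν y) :
    ∀ y, 0 < y → y ≤ b → 0 < F (ν + 1) y := by
  intro y hy hyb
  have hν1 : 0 ≤ ν + 1 := by positivity
  have hm : StrictMonoOn (fun t : ℝ => t ^ (ν + 1) * F (ν + 1) t) (Icc 0 b) := by
    apply strictMonoOn_of_deriv_pos (convex_Icc _ _)
    · exact ((Real.continuous_rpow_const hν1).mul (F_cont hν1)).continuousOn
    · intro t ht
      rw [interior_Icc] at ht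
      have ht0 : 0 < t := ht.1
      have hd := (Real.hasDerivAt_rpow_const (x := t) (p := ν + 1) (Or.inl ht0.ne')).mul
        (F_deriv hν1 t)
      have hd' : deriv (fun t : ℝ => t ^ (ν + 1) * F (ν + 1) t) t = t ^ ν * F ν t := by
        refine hd.deriv.trans ?_
        rw [F_rec hν t, Real.rpow_add_one ht0.ne', show ν + 1 - 1 = ν by ring,
          show ν + 1 + 1 = ν + 2 by ring]
        ring
      rw [hd']
      exact mul_pos (Real.rpow_pos_of_pos ht0 _) (h t ht0 ht.2)
  have h1 := hm (left_mem_Icc.2 (hy.le.trans hyb)) ⟨hy.le, hyb⟩ hy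
  simp only [Real.zero_rpow (by positivity : ν + 1 ≠ 0), zero_mul] at h1
  exact (pos_iff_pos_of_mul_pos h1).1 (Real.rpow_pos_of_pos hy _)

lemma F_pos_all {ν : ℝ} (hν : 0 ≤ ν) {b : ℝ} (h : ∀ y, 0 < y → y < b → 0 < F ν y) (k : ℕ) :
    ∀ y, 0 < y → y ≤ b → 0 < F (ν + (k + 1 : ℕ)) y := by
  induction k with
  | zero => simpa using F_pos_step hν h
  | succ k ih =>
    have := F_pos_step (ν := ν + (k + 1 : ℕ)) (by positivity) (fun y h1 h2 => ih y h1 h2.le)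
    intro y h1 h2
    have h3 := this y h1 h2
    rwa [show ν + ((k + 1 : ℕ) : ℝ) + 1 = ν + ((k + 1 + 1 : ℕ) : ℝ) by push_cast; ring] at h3

/-- a function with positive value at 0, without zeros up to b, is positive -/
lemma F_pos_of_ne {ν : ℝ} (hν : 0 ≤ ν) {b : ℝ} (h : ∀ y, 0 < y → y < b → F ν y ≠ 0) :
    ∀ y, 0 < y → y < b → 0 < F ν y := by
  intro y hy hyb
  by_contra hneg
  push Not at hneg
  obtain ⟨c, hc, hc0⟩ := intermediate_value_Icc' hy.le (F_cont hν).continuousOn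
    ⟨hneg, (F_zero_pos hν).le⟩
  rcases hc.1.eq_or_lt with h0 | h0
  · rw [← h0] at hc0
    exact (F_zero_pos hν).ne' hc0
  · exact h c h0 (hc.2.trans_lt hyb) hc0

lemma exists_zero {ν : ℝ} (hν : 0 ≤ ν) : ∃ y, 0 < y ∧ F ν y = 0 := by
  by_contra hcon
  push Not at hcon
  set y : ℝ := (ν + 1) * (ν + 2) with hy
  have hy0 : 0 < y := by positivity
  have hp := F_pos_of_ne hν (b := y + 1) (fun y h _ => hcon y h)
  have hp0 := hp y hy0 (by linarith)
  have h2 := F_pos_all hν hp 1 y hy0 (by linarith)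
  have h3 := F_pos_all hν hp 2 y hy0 (by linarith)
  have r0 := F_rec hν y
  have r1 := F_rec (ν := ν + 1) (by positivity) y
  norm_num at h2 h3
  rw [show ν + 1 + 1 = ν + 2 by ring, show ν + 1 + 2 = ν + 3 by ring] at r1
  have a1 : F (ν + 1) y < (ν + 2) * F (ν + 2) y := by nlinarith [mul_pos hy0 h3]
  have a2 : (ν + 1) * F (ν + 1) y < (ν + 1) * ((ν + 2) * F (ν + 2) y) :=
    mul_lt_mul_of_pos_left a1 (by positivity)
  have a3 : y * F (ν + 2) y = (ν + 1) * ((ν + 2) * F (ν + 2) y) := by rw [hy]; ring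
  linarith

lemma zero_spec {ν : ℝ} (hν : 0 ≤ ν) :
    0 < besselJzero ν ∧
      ∀ y, 0 < y → y < (besselJzero ν / 2) ^ 2 → 0 < F ν y := by
  set S := {x : ℝ | 0 < x ∧ besselJ ν x = 0} with hS
  have hJ : ∀ x, 0 < x → (besselJ ν x = 0 ↔ F ν ((x / 2) ^ 2) = 0) := by
    intro x hx
    rw [J_eq ν hx, mul_eq_zero]
    have : (x / 2) ^ ν ≠ 0 := (Real.rpow_pos_of_pos (by positivity) _).ne'
    tauto
  have hne : S.Nonempty := by
    obtain ⟨y, hy, h0⟩ := exists_zero hν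
    refine ⟨2 * √y, by positivity, (hJ _ (by positivity)).2 ?_⟩
    rw [show (2 * √y / 2) ^ 2 = y by
      rw [mul_div_cancel_left₀ _ two_ne_zero]; exact Real.sq_sqrt hy.le]
    exact h0
  have hbdd : BddBelow S := ⟨0, fun x hx => hx.1.le⟩
  have hev : ∀ᶠ x in 𝓝 (0 : ℝ), 0 < F ν ((x / 2) ^ 2) := by
    have hc : Continuous fun x : ℝ => F ν ((x / 2) ^ 2) := (F_cont hν).comp (by fun_prop)
    apply hc.continuousAt.eventually_const_lt
    simpa using F_zero_pos hν
  obtain ⟨ε, hε, hball⟩ := Metric.eventually_nhds_iff.1 hev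
  have hz : ε ≤ besselJzero ν := by
    apply le_csInf hne
    intro x hx
    by_contra hlt
    push Not at hlt
    have := hball (y := x) (by simpa [abs_of_pos hx.1] using hlt)
    exact this.ne' ((hJ x hx.1).1 hx.2)
  refine ⟨hε.trans_le hz, F_pos_of_ne hν ?_⟩
  intro y hy hyb h0
  have hmem : 2 * √y ∈ S := by
    refine ⟨by positivity, (hJ _ (by positivity)).2 ?_⟩
    rw [show (2 * √y / 2) ^ 2 = y by
      rw [mul_div_cancel_left₀ _ two_ne_zero]; exact Real.sq_sqrt hy.le]
    exact h0
  have h1 : besselJzero ν ≤ 2 * √y := csInf_le hbdd hmem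
  have h2 : √y < besselJzero ν / 2 :=
    (Real.sqrt_lt' (by linarith)).2 hyb
  linarith

lemma F_bounds {ν : ℝ} (hν : 0 ≤ ν) {b : ℝ} (hb : 0 ≤ b)
    (h1 : ∀ y, 0 < y → y ≤ b → 0 < F (ν + 1) y)
    (h2 : ∀ y, 0 < y → y ≤ b → 0 < F (ν + 2) y) :
    F (ν + 1) b ≤ F (ν + 1) 0 ∧ F ν 0 - b * F (ν + 1) 0 ≤ F ν b := by
  have hν1 : 0 ≤ ν + 1 := by positivity
  have A : AntitoneOn (F (ν + 1)) (Icc 0 b) := by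
    apply antitoneOn_of_deriv_nonpos (convex_Icc _ _) (F_cont hν1).continuousOn
      (fun t _ => (F_deriv hν1 t).differentiableAt.differentiableWithinAt)
    intro t ht
    rw [interior_Icc] at ht
    rw [(F_deriv hν1 t).deriv, show ν + 1 + 1 = ν + 2 by ring]
    linarith [h2 t ht.1 ht.2.le]
  have hl : (0 : ℝ) ∈ Icc 0 b := left_mem_Icc.2 hb
  have hr : b ∈ Icc 0 b := right_mem_Icc.2 hb
  refine ⟨A hl hr hb, ?_⟩
  have hd : ∀ t, HasDerivAt (fun t => F ν t + t * F (ν + 1) 0) (- F (ν + 1) t + 1 * F (ν + 1) 0) t :=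
    fun t => (F_deriv hν t).add ((hasDerivAt_id t).mul_const _)
  have B : MonotoneOn (fun t => F ν t + t * F (ν + 1) 0) (Icc 0 b) := by
    apply monotoneOn_of_deriv_nonneg (convex_Icc _ _)
      (fun t _ => (hd t).continuousAt.continuousWithinAt)
      (fun t _ => (hd t).differentiableAt.differentiableWithinAt)
    intro t ht
    rw [interior_Icc] at ht
    rw [(hd t).deriv]
    linarith [A hl ⟨ht.1.le, ht.2.le⟩ ht.1.le]
  have := B hl hr hb
  simp only [zero_mul, add_zero] at this
  linarith

/-- Purely sequential part. -/
lemma seq_dec {R c : ℕ → ℝ} (hpos : ∀ k, 0 < R k) (hlim : Tendsto R atTop (𝓝 0))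
    {d : ℝ} (hd : 0 < d) (hc : ∀ k, c (k + 1) = c k + d)
    (hrec : ∀ k, (R k)⁻¹ = c k - R (k + 1)) : ∀ k, R (k + 1) < R k := by
  have step : ∀ k, R (k + 2) < R (k + 1) → R (k + 1) < R k := by
    intro k h
    have h1 := hrec k
    have h2 := hrec (k + 1)
    rw [hc] at h2
    exact (inv_lt_inv₀ (hpos k) (hpos (k + 1))).1 (by
      rw [h1, h2]; linarith)
  have back : ∀ n k, R (k + n + 1) < R (k + n) → R (k + 1) < R k := by
    intro n
    induction n with
    | zero => intro k h; exact h
    | succ n ih => intro k h; exact ih k (step (k + n) h)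
  intro k
  by_contra hk
  have hall : ∀ n, R (k + n) ≤ R (k + n + 1) := by
    intro n
    by_contra hn
    exact hk (back n k (not_le.1 hn))
  have hmono : Monotone fun n => R (k + n) := monotone_nat_of_le_succ hall
  have hl : Tendsto (fun n => R (k + n)) atTop (𝓝 0) := by
    have := (tendsto_add_atTop_iff_nat k).2 hlim
    simpa [add_comm] using this
  have := hmono.ge_of_tendsto hl 0
  linarith [hpos (k + 0)]

lemma seq_convex {R c : ℕ → ℝ} (hpos : ∀ k, 0 < R k) (hlim : Tendsto R atTop (𝓝 0))
    {d : ℝ} (hd : 0 < d) (hc : ∀ k, c (k + 1) = c k + d)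
    (hrec : ∀ k, (R k)⁻¹ = c k - R (k + 1)) :
    ∀ k, 0 ≤ R (k + 2) - 2 * R (k + 1) + R k := by
  have hdec := seq_dec hpos hlim hd hc hrec
  have step : ∀ k, 0 ≤ R (k + 3) - 2 * R (k + 2) + R (k + 1) →
      0 ≤ R (k + 2) - 2 * R (k + 1) + R k := by
    intro k h
    have e0 := hrec k
    have e1 := hrec (k + 1)
    have e2 := hrec (k + 2)
    have c1 := hc k
    have c2 := hc (k + 1)
    have p0 := hpos k
    have p1 := hpos (k + 1)
    have p2 := hpos (k + 2)
    have hi : (R k)⁻¹ + (R (k + 2))⁻¹ ≤ 2 * (R (k + 1))⁻¹ := by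
      rw [e0, e1, e2]
      simp only [add_assoc] at *
      norm_num at *
      linarith
    generalize R k = x at *
    generalize R (k + 1) = y at *
    generalize R (k + 2) = w at *
    have h3 : (x + w) * y ≤ 2 * (x * w) := by
      have : (x⁻¹ + w⁻¹) * (x * w * y) ≤ 2 * y⁻¹ * (x * w * y) :=
        mul_le_mul_of_nonneg_right hi (by positivity)
      have l : (x⁻¹ + w⁻¹) * (x * w * y) = (x + w) * y := by field_simp; ring
      have r : 2 * y⁻¹ * (x * w * y) = 2 * (x * w) := by field_simp
      rwa [l, r] at this
    have h4 : 2 * y * (x + w) ≤ (x + w) * (x + w) := by nlinarith [sq_nonneg (x - w)]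
    have := le_of_mul_le_mul_right h4 (by positivity)
    linarith
  have back : ∀ n k, 0 ≤ R (k + n + 2) - 2 * R (k + n + 1) + R (k + n) →
      0 ≤ R (k + 2) - 2 * R (k + 1) + R k := by
    intro n
    induction n with
    | zero => intro k h; exact h
    | succ n ih => intro k h; exact ih k (step (k + n) h)
  intro k
  by_contra hk
  have hall : ∀ n, R (k + n + 2) - 2 * R (k + n + 1) + R (k + n) ≤ 0 := by
    intro n
    by_contra hn
    exact hk (back n k (not_le.1 hn).le)
  have hanti : Antitone fun n => R (k + n + 1) - R (k + n) := by
    apply antitone_nat_of_succ_le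
    intro n
    have := hall n
    show R (k + n + 2) - R (k + n + 1) ≤ _
    linarith
  have hl : Tendsto (fun n => R (k + n)) atTop (𝓝 0) := by
    have := (tendsto_add_atTop_iff_nat k).2 hlim
    simpa [add_comm] using this
  have hl2 : Tendsto (fun n => R (k + n + 1) - R (k + n)) atTop (𝓝 0) := by
    have := ((tendsto_add_atTop_iff_nat 1).2 hl).sub hl
    rw [sub_zero] at this
    exact this
  have : 0 ≤ R (k + 0 + 1) - R (k + 0) := hanti.le_of_tendsto hl2 0
  have h2 := hdec (k + 0)

  linarith

end BesselAux

open BesselAux in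
/-- **Properties of the Bessel ratio sequence (Lemma 2.3, first part).**
With `z_N = j_{N/2-1}` and `ℓ_k = k + N/2 - 1`, the sequence
`ρ_k = J_{ℓ_k+1}(z_N)/J_{ℓ_k}(z_N)` (`k ≥ 1`) is positive, strictly decreasing, vanishing at
infinity, and convex for `k ≥ 2`. -/
theorem bessel_ratio_sequence_properties (N : ℕ) (hN : 2 ≤ N) :
    (∀ k : ℕ, 1 ≤ k →
      0 < besselJ ((k : ℝ) + N / 2) (besselJzero ((N : ℝ) / 2 - 1)) /
          besselJ ((k : ℝ) + N / 2 - 1) (besselJzero ((N : ℝ) / 2 - 1))) ∧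
    (∀ k : ℕ, 1 ≤ k →
      besselJ (((k : ℝ) + 1) + N / 2) (besselJzero ((N : ℝ) / 2 - 1)) /
          besselJ (((k : ℝ) + 1) + N / 2 - 1) (besselJzero ((N : ℝ) / 2 - 1)) <
        besselJ ((k : ℝ) + N / 2) (besselJzero ((N : ℝ) / 2 - 1)) /
          besselJ ((k : ℝ) + N / 2 - 1) (besselJzero ((N : ℝ) / 2 - 1))) ∧
    Tendsto (fun k : ℕ =>
      besselJ ((k : ℝ) + N / 2) (besselJzero ((N : ℝ) / 2 - 1)) /
        besselJ ((k : ℝ) + N / 2 - 1) (besselJzero ((N : ℝ) / 2 - 1)))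
      atTop (𝓝 0) ∧
    (∀ k : ℕ, 3 ≤ k →
      0 ≤ besselJ (((k : ℝ) + 1) + N / 2) (besselJzero ((N : ℝ) / 2 - 1)) /
            besselJ (((k : ℝ) + 1) + N / 2 - 1) (besselJzero ((N : ℝ) / 2 - 1)) -
          2 * (besselJ ((k : ℝ) + N / 2) (besselJzero ((N : ℝ) / 2 - 1)) /
            besselJ ((k : ℝ) + N / 2 - 1) (besselJzero ((N : ℝ) / 2 - 1))) +
          besselJ (((k : ℝ) - 1) + N / 2) (besselJzero ((N : ℝ) / 2 - 1)) /
            besselJ (((k : ℝ) - 1) + N / 2 - 1) (besselJzero ((N : ℝ) / 2 - 1))) := by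
  set a : ℝ := (N : ℝ) / 2 - 1 with ha
  have ha0 : 0 ≤ a := by
    have : (2 : ℝ) ≤ N := by exact_mod_cast hN
    rw [ha]; linarith
  obtain ⟨hz, hF⟩ := zero_spec ha0
  set z := besselJzero a
  set w := z / 2 with hw
  have hw0 : 0 < w := by positivity
  have hpos := F_pos_all ha0 hF
  have hw2 : 0 < w ^ 2 := by positivity
  -- G k = F_{a+k+1}
  set G : ℕ → ℝ := fun k => F (a + (k + 1 : ℕ)) (w ^ 2) with hG
  have hGpos : ∀ k, 0 < G k := fun k => hpos k _ hw2 le_rfl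
  set R : ℕ → ℝ := fun k => w * G (k + 1) / G k with hR
  have hRpos : ∀ k, 0 < R k := fun k => div_pos (mul_pos hw0 (hGpos _)) (hGpos _)
  have hGrec : ∀ k : ℕ, G k = (a + k + 2) * G (k + 1) - w ^ 2 * G (k + 2) := by
    intro k
    have h := F_rec (ν := a + (k + 1 : ℕ)) (by positivity) (w ^ 2)
    simp only [hG]
    rw [h, show a + ((k + 1 : ℕ) : ℝ) + 1 = a + ((k + 1 + 1 : ℕ) : ℝ) by push_cast; ring,
      show a + ((k + 1 : ℕ) : ℝ) + 2 = a + ((k + 2 + 1 : ℕ) : ℝ) by push_cast; ring]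
    push_cast; ring
  have hrec : ∀ k, (R k)⁻¹ = (a + k + 2) / w - R (k + 1) := by
    intro k
    have h1 := hGpos (k + 1)
    simp only [hR]
    rw [inv_div, hGrec k]
    field_simp
  have hJ : ∀ k : ℕ, besselJ (a + (k + 2 : ℕ)) z / besselJ (a + (k + 1 : ℕ)) z = R k := by
    intro k
    rw [J_eq _ hz, J_eq _ hz, ← hw]
    have e : a + ((k + 2 : ℕ) : ℝ) = a + ((k + 1 : ℕ) : ℝ) + 1 := by push_cast; ring
    have e' : w ^ (a + ((k + 2 : ℕ) : ℝ)) = w ^ (a + ((k + 1 : ℕ) : ℝ)) * w := by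
      rw [e, Real.rpow_add_one hw0.ne']
    rw [e']
    have hp : 0 < w ^ (a + ((k + 1 : ℕ) : ℝ)) := Real.rpow_pos_of_pos hw0 _
    simp only [hR, hG]
    rw [mul_assoc, mul_div_mul_left _ _ hp.ne']
  have hlim : Tendsto R atTop (𝓝 0) := by
    have hat : Tendsto (fun k : ℕ => (a + k + 2) - w ^ 2) atTop atTop := by
      have := tendsto_atTop_add_const_right atTop (a + 2 - w ^ 2)
        (tendsto_natCast_atTop_atTop (R := ℝ))
      refine this.congr fun k => by ring
    have hlim2 : Tendsto (fun k : ℕ => w / ((a + k + 2) - w ^ 2)) atTop (𝓝 0) :=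
      hat.const_div_atTop w
    refine squeeze_zero' (Eventually.of_forall fun k => (hRpos k).le) ?_ hlim2
    filter_upwards [hat.eventually_gt_atTop 0] with k hk
    have hb := F_bounds (ν := a + (k + 1 : ℕ)) (b := w ^ 2) (by positivity) hw2.le
      (by
        have := hpos (k + 1)
        rwa [show a + ((k + 1 + 1 : ℕ) : ℝ) = a + ((k + 1 : ℕ) : ℝ) + 1 by push_cast; ring] at this)
      (by
        have := hpos (k + 2)
        rwa [show a + ((k + 2 + 1 : ℕ) : ℝ) = a + ((k + 1 : ℕ) : ℝ) + 2 by push_cast; ring] at this)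
    rw [F_zero_rec (ν := a + (k + 1 : ℕ)) (by positivity)] at hb
    have hf : 0 < F (a + (k + 1 : ℕ) + 1) 0 := F_zero_pos (by positivity)
    obtain ⟨b1, b2⟩ := hb
    have g1 : G (k + 1) = F (a + (k + 1 : ℕ) + 1) (w ^ 2) := by
      simp only [hG]; congr 1; push_cast; ring
    rw [← g1] at b1
    have b2' : ((a + k + 2) - w ^ 2) * F (a + (k + 1 : ℕ) + 1) 0 ≤ G k := by
      refine le_trans (le_of_eq ?_) b2
      push_cast; ring
    simp only [hR]
    rw [div_le_div_iff₀ (hGpos k) hk]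
    have : ((a + k + 2) - w ^ 2) * G (k + 1) ≤ G k :=
      le_trans (mul_le_mul_of_nonneg_left b1 hk.le) b2'
    nlinarith
  have hcc : ∀ k : ℕ, (a + (k + 1 : ℕ) + 2) / w = (a + k + 2) / w + 1 / w := by
    intro k; push_cast; field_simp; ring
  have hd : 0 < 1 / w := by positivity
  have hdec := seq_dec (c := fun k => (a + k + 2) / w) hRpos hlim hd hcc hrec
  have hconv := seq_convex (c := fun k => (a + k + 2) / w) hRpos hlim hd hcc hrec
  have key : ∀ (k : ℕ) (p q : ℝ), p = a + (k + 2 : ℕ) → q = a + (k + 1 : ℕ) →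
      besselJ p z / besselJ q z = R k := by
    rintro k p q rfl rfl; exact hJ k
  refine ⟨?_, ?_, ?_, ?_⟩
  · intro k hk
    obtain ⟨k, rfl⟩ := Nat.exists_eq_add_of_le' hk
    rw [key k _ _ (by rw [ha]; push_cast; ring) (by rw [ha]; push_cast; ring)]
    exact hRpos k
  · intro k hk
    obtain ⟨k, rfl⟩ := Nat.exists_eq_add_of_le' hk
    rw [key k (((k + 1 : ℕ) : ℝ) + N / 2) _ (by rw [ha]; push_cast; ring)
        (by rw [ha]; push_cast; ring),
      key (k + 1) _ _ (by rw [ha]; push_cast; ring) (by rw [ha]; push_cast; ring)]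
    exact hdec k
  · rw [← tendsto_add_atTop_iff_nat 1]
    refine hlim.congr fun k => ?_
    rw [key k _ _ (by rw [ha]; push_cast; ring) (by rw [ha]; push_cast; ring)]
  · intro k hk
    obtain ⟨k, rfl⟩ := Nat.exists_eq_add_of_le' hk
    rw [key (k + 3) ((((k + 3 : ℕ) : ℝ) + 1) + N / 2) _ (by rw [ha]; push_cast; ring)
        (by rw [ha]; push_cast; ring),
      key (k + 2) (((k + 3 : ℕ) : ℝ) + N / 2) _ (by rw [ha]; push_cast; ring)
        (by rw [ha]; push_cast; ring),
      key (k + 1) _ _ (by rw [ha]; push_cast; ring) (by rw [ha]; push_cast; ring)]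
    exact hconv (k + 1)
end
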